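/- Under assumptions (A) and (B), the mixture of product measures ν_N approximates the Gibbs measure μ_N in relative entropy in both directions: H(μ_N|ν_N) → 0 and H(ν_N|μ_N) → 0 as N → ∞. -/

import Mathlib

/-!
# Mean-field Gibbs measures as mixtures of product measures

Write `m` for the magnetization of `σ` and `gap = max G - G ≥ 0`. Up to constants, the Gibbs weight
of `σ` is `exp (-N ent m) exp (-N gap m)`, while a product measure with marginals `π` gives `σ` the
weight `exp (-N ent m) exp (-N KL(m | π))`. The factor `exp (-N ent m)` therefore drops out of
the ratio of the two measures, and what has to be compared is `exp (-N gap m)` and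
`∑ j, w j * 𝔼 exp (-N KL(m | M j + ξ / √N))`.

At `m = M j + y / √N` the first tends to `exp (-½ yᵀ H y)`, with `H = H j`. By dominated convergence
the expectation in the second tends to a Gaussian convolution; since the multinomial covariance
`covMat (M j)` and `Σ` add up to `H⁻¹`, this equals `√(det H ∏ M) exp (-½ yᵀ H y)`
(`gaussian_convolution`, `tendsto_mixDens_self`). The components centered at other maximizers vanish
(`tendsto_mixDens_other`), and `w j` cancels the prefactor, so that the log-ratio tends to zero
uniformly for bounded `y` (`eventually_log_ratio_le`).

Far from the maximizers, Gaussian lower bounds for the mixture show that the log-ratio is at most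
`C (1 + N gap)` (`exists_log_bound`), and `1 + N gap` has bounded second moment under both measures
(`exists_gibbs_moment`, `exists_mixComp_gap_moment`). For the Gibbs weights this rests on
`exists_gauss_sum_bound`, which replaces Stirling estimates: each term `exp (-N ent m)` is dominated
by an average of product measures, whose total mass is one. These three facts give the convergence of
both relative entropies, and of the normalization, by the general criterion `relEnt_tendsto`.
-/

open Filter Real MeasureTheory

/-- Relative entropy (Kullback–Leibler divergence) between two probability mass
functions on a finite set (finite whenever `ρ ≪ π`, which holds in our setting). -/
noncomputable def relEnt {α : Type*} [Fintype α] (rho pion : α → ℝ) : ℝ :=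
  ∑ x, rho x * Real.log (rho x / pion x)

namespace GibbsMixture

open scoped Topology Matrix

/-! ### An abstract criterion for convergence in relative entropy -/

lemma abs_sub_le_add_mul_abs_log {a b : ℝ} (ha : 0 < a) (hb : 0 < b) :
    |a - b| ≤ (a + b) * |log (a / b)| := by
  have key : ∀ a b : ℝ, 0 < a → 0 < b → a - b ≤ (a + b) * |log (a / b)| := by
    intro a b ha hb
    have h1 : log (b / a) ≤ b / a - 1 := log_le_sub_one_of_pos (by positivity)
    have h2 : log (b / a) = - log (a / b) := by rw [← log_inv, inv_div]
    have h3 : 1 - b / a ≤ |log (a / b)| := by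
      have := le_abs_self (log (a / b)); linarith
    have h4 : a * (1 - b / a) ≤ a * |log (a / b)| := by gcongr
    have h5 : a * (1 - b / a) = a - b := by field_simp
    have h6 : 0 ≤ b * |log (a / b)| := by positivity
    linarith
  rw [abs_le]
  constructor
  · have := key b a hb ha
    rw [← inv_div, log_inv, abs_neg] at this
    linarith
  · exact key a b ha hb

/-- A finite family of weights with bounded second `W`-moment integrates to `0` any functions
`h` of size `O(W)` that go to zero uniformly on the sublevel sets of `W`. -/
lemma tendsto_sum_of_moment {α : ℕ → Type} [∀ N, Fintype (α N)] (ρ h W : ∀ N, α N → ℝ) (C : ℝ)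
    (hW : ∀ N s, 1 ≤ W N s)
    (hρ : ∀ᶠ N in atTop, ∀ s, 0 ≤ ρ N s)
    (hh : ∀ᶠ N in atTop, ∀ s, |h N s| ≤ C * W N s)
    (hm : ∀ᶠ N in atTop, ∑ s, ρ N s * W N s ^ 2 ≤ C)
    (hu : ∀ R : ℝ, ∀ ε > 0, ∀ᶠ N in atTop, ∀ s, W N s ≤ R → |h N s| ≤ ε) :
    Tendsto (fun N => ∑ s, ρ N s * |h N s|) atTop (𝓝 0) := by
  rw [Metric.tendsto_atTop']
  suffices H : ∀ ε > 0, ∀ᶠ N in atTop, dist (∑ s, ρ N s * |h N s|) 0 < ε by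
    intro ε hε
    obtain ⟨n, hn⟩ := eventually_atTop.1 (H ε hε)
    exact ⟨n, fun m hm => hn m hm.le⟩
  intro ε hε
  set C' : ℝ := |C| + 1 with hC'
  have hC'pos : 0 < C' := by positivity
  have hCC' : C ≤ C' := by have := le_abs_self C; linarith
  -- Above the level `R` one has `|h| ≤ C' W ≤ (C' / R) W²`; this choice makes `C'² / R ≤ ε / 4`.
  set R : ℝ := C' * C' / (ε / 4) + 1 with hR
  have hRpos : 0 < R := by positivity
  have hRC : C' * C' / R ≤ ε / 4 := by
    rw [div_le_iff₀ hRpos, hR]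
    have : ε / 4 * (C' * C' / (ε / 4) + 1) = C' * C' + ε / 4 := by field_simp
    rw [this]; linarith
  filter_upwards [hρ, hh, hm, hu R (ε / (4 * C')) (by positivity)] with N h1 h2 h3 h4
  have hterm : ∀ s, ρ N s * |h N s| ≤ (ε / (4 * C') + C' / R) * (ρ N s * W N s ^ 2) := by
    intro s
    have hWs := hW N s
    have hb : |h N s| ≤ (ε / (4 * C') + C' / R) * W N s ^ 2 := by
      by_cases hs : W N s ≤ R
      · have h5 := h4 s hs
        have h6 : ε / (4 * C') * 1 ≤ ε / (4 * C') * W N s ^ 2 := by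
          gcongr; nlinarith
        have h7 : 0 ≤ C' / R * W N s ^ 2 := by positivity
        linarith
      · have h5 := h2 s
        push Not at hs
        have h6 : C * W N s ≤ C' * W N s := by gcongr
        have h7 : C' * W N s ≤ C' / R * W N s ^ 2 := by
          rw [div_mul_eq_mul_div, le_div_iff₀ hRpos]
          have : C' * W N s * R ≤ C' * W N s * W N s := by gcongr
          nlinarith
        have h8 : 0 ≤ ε / (4 * C') * W N s ^ 2 := by positivity
        linarith
    calc ρ N s * |h N s| ≤ ρ N s * ((ε / (4 * C') + C' / R) * W N s ^ 2) := by
          gcongr; exact h1 s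
      _ = _ := by ring
  have hsum : ∑ s, ρ N s * |h N s| ≤ (ε / (4 * C') + C' / R) * C' := by
    calc _ ≤ ∑ s, (ε / (4 * C') + C' / R) * (ρ N s * W N s ^ 2) := Finset.sum_le_sum fun s _ => hterm s
      _ = (ε / (4 * C') + C' / R) * ∑ s, (ρ N s * W N s ^ 2) := by rw [Finset.mul_sum]
      _ ≤ _ := by gcongr; linarith
  have h9 : (ε / (4 * C') + C' / R) * C' = ε / 4 + C' * C' / R := by
    field_simp
  have h10 : 0 ≤ ∑ s, ρ N s * |h N s| :=
    Finset.sum_nonneg fun s _ => mul_nonneg (h1 s) (abs_nonneg _)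
  rw [Real.dist_eq, sub_zero, abs_of_nonneg h10]
  linarith

/-- Unnormalised weights `f` and probability weights `ν` whose log-ratio is `O(W)` and vanishes
uniformly on the sublevel sets of `W`, both with bounded second `W`-moment: then `f / ∑ f` and `ν`
are asymptotically equal in relative entropy, in both directions. -/
theorem relEnt_tendsto {α : ℕ → Type} [∀ N, Fintype (α N)] (f ν W : ∀ N, α N → ℝ) (C : ℝ)
    (hW : ∀ N s, 1 ≤ W N s)
    (hf0 : ∀ᶠ N in atTop, ∀ s, 0 < f N s)
    (hν0 : ∀ᶠ N in atTop, ∀ s, 0 < ν N s)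
    (hν1 : ∀ᶠ N in atTop, ∑ s, ν N s = 1)
    (hh : ∀ᶠ N in atTop, ∀ s, |log (f N s / ν N s)| ≤ C * W N s)
    (hfm : ∀ᶠ N in atTop, ∑ s, f N s * W N s ^ 2 ≤ C)
    (hνm : ∀ᶠ N in atTop, ∑ s, ν N s * W N s ^ 2 ≤ C)
    (hu : ∀ R : ℝ, ∀ ε > 0, ∀ᶠ N in atTop, ∀ s, W N s ≤ R → |log (f N s / ν N s)| ≤ ε) :
    Tendsto (fun N => relEnt (fun s => f N s / ∑ t, f N t) (ν N)) atTop (𝓝 0) ∧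
    Tendsto (fun N => relEnt (ν N) (fun s => f N s / ∑ t, f N t)) atTop (𝓝 0) := by
  have Tf := tendsto_sum_of_moment f (fun N s => log (f N s / ν N s)) W C hW
    (hf0.mono fun N h s => (h s).le) hh hfm hu
  have Tν := tendsto_sum_of_moment ν (fun N s => log (f N s / ν N s)) W C hW
    (hν0.mono fun N h s => (h s).le) hh hνm hu
  have Tf' : Tendsto (fun N => ∑ s, f N s * log (f N s / ν N s)) atTop (𝓝 0) := by
    apply squeeze_zero_norm' _ Tf
    filter_upwards [hf0] with N h0
    refine (norm_sum_le _ _).trans (Finset.sum_le_sum fun s _ => ?_)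
    rw [norm_mul, norm_eq_abs, norm_eq_abs, abs_of_pos (h0 s)]
  have Tν' : Tendsto (fun N => ∑ s, ν N s * log (f N s / ν N s)) atTop (𝓝 0) := by
    apply squeeze_zero_norm' _ Tν
    filter_upwards [hν0] with N h0
    refine (norm_sum_le _ _).trans (Finset.sum_le_sum fun s _ => ?_)
    rw [norm_mul, norm_eq_abs, norm_eq_abs, abs_of_pos (h0 s)]
  -- The normalization tends to one, since `|f - ν| ≤ (f + ν) |log (f / ν)|`.
  have TZ : Tendsto (fun N => ∑ s, f N s) atTop (𝓝 1) := by
    rw [tendsto_iff_norm_sub_tendsto_zero]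
    have hT := Tf.add Tν
    rw [add_zero] at hT
    apply squeeze_zero' (Eventually.of_forall fun N => norm_nonneg _) _ hT
    filter_upwards [hf0, hν0, hν1] with N h0 h0' h1
    rw [← h1, ← Finset.sum_sub_distrib, ← Finset.sum_add_distrib]
    refine (norm_sum_le _ _).trans (Finset.sum_le_sum fun s _ => ?_)
    rw [norm_eq_abs, ← add_mul]
    exact abs_sub_le_add_mul_abs_log (h0 s) (h0' s)
  have TL : Tendsto (fun N => log (∑ s, f N s)) atTop (𝓝 0) := by
    have := (continuousAt_log one_ne_zero).tendsto.comp TZ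
    rw [log_one] at this
    exact this
  have hZpos : ∀ᶠ N in atTop, 0 < ∑ s, f N s := TZ.eventually (lt_mem_nhds one_pos)
  constructor
  · have T := ((TZ.inv₀ one_ne_zero).mul Tf').sub TL
    simp only [mul_zero, sub_zero] at T
    refine T.congr' ?_
    filter_upwards [hf0, hν0, hZpos] with N h0 h0' hZ
    set Z := ∑ s, f N s with hZdef
    have : ∀ s, f N s / Z * log (f N s / Z / ν N s)
        = Z⁻¹ * (f N s * log (f N s / ν N s)) - Z⁻¹ * f N s * log Z := by
      intro s
      rw [div_right_comm, log_div (div_pos (h0 s) (h0' s)).ne' hZ.ne']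
      field_simp
    simp only [relEnt, this, Finset.sum_sub_distrib, ← Finset.mul_sum, ← Finset.sum_mul, ← hZdef]
    rw [inv_mul_cancel₀ hZ.ne', one_mul]
  · have T := TL.sub Tν'
    simp only [sub_zero] at T
    refine T.congr' ?_
    filter_upwards [hf0, hν0, hν1, hZpos] with N h0 h0' h1 hZ
    set Z := ∑ s, f N s with hZdef
    have : ∀ s, ν N s * log (ν N s / (f N s / Z))
        = ν N s * log Z - ν N s * log (f N s / ν N s) := by
      intro s
      have e : ν N s / (f N s / Z) = Z / (f N s / ν N s) := by
        have := (h0 s).ne'; have := (h0' s).ne'; have := hZ.ne'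
        field_simp
      rw [e, log_div hZ.ne' (div_pos (h0 s) (h0' s)).ne']
      ring
    simp only [relEnt, this, Finset.sum_sub_distrib, ← Finset.sum_mul, h1, one_mul]

/-! ### Pointwise estimates for the Kullback–Leibler divergence -/

/-- The nonnegative summand `a log (a / b) - a + b` of the Kullback–Leibler divergence; with the
convention `log 0 = 0` it has the right value `b` at `a = 0`. -/
noncomputable def klTerm (a b : ℝ) : ℝ := a * (log a - log b) - a + b

/-- Comparison with the squared Hellinger distance: `klTerm a b ≥ (√a - √b)²`, and
`√a + √b ≤ 2`. -/
lemma klTerm_lower {a b : ℝ} (ha : 0 ≤ a) (ha1 : a ≤ 1) (hb : 0 < b) (hb1 : b ≤ 1) :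
    (a - b) ^ 2 / 4 ≤ klTerm a b := by
  set u := √a with hu
  set v := √b with hv
  have hu2 : u ^ 2 = a := sq_sqrt ha
  have hv2 : v ^ 2 = b := sq_sqrt hb.le
  have hu0 : 0 ≤ u := sqrt_nonneg _
  have hv0 : 0 < v := sqrt_pos.2 hb
  have hu1 : u ≤ 1 := sqrt_le_one.2 ha1
  have hv1 : v ≤ 1 := sqrt_le_one.2 hb1
  have key : (u - v) ^ 2 ≤ klTerm a b := by
    rcases hu0.eq_or_lt with h | h
    · have : a = 0 := by rw [← hu2, ← h]; ring
      rw [klTerm, this, ← h]; nlinarith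
    · rw [klTerm, ← hu2, ← hv2, log_pow, log_pow]
      have h1 : log (v / u) ≤ v / u - 1 := log_le_sub_one_of_pos (by positivity)
      rw [log_div hv0.ne' h.ne'] at h1
      have h2 : u ^ 2 * (1 - v / u) ≤ u ^ 2 * (log u - log v) := by exact mul_le_mul_of_nonneg_left (by linarith) (by positivity)
      have h3 : u ^ 2 * (1 - v / u) = u ^ 2 - u * v := by field_simp
      push_cast
      nlinarith
  have : (a - b) ^ 2 / 4 ≤ (u - v) ^ 2 := by
    rw [← hu2, ← hv2]
    have e : (u ^ 2 - v ^ 2) ^ 2 = (u - v) ^ 2 * (u + v) ^ 2 := by ring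
    have : (u + v) ^ 2 ≤ 2 ^ 2 := by gcongr; linarith
    rw [e]
    nlinarith [sq_nonneg (u - v)]
  linarith

lemma klTerm_upper {a b : ℝ} (ha : 0 ≤ a) (hb : 0 < b) : klTerm a b ≤ (a - b) ^ 2 / b := by
  rcases ha.eq_or_lt with h | h
  · rw [klTerm, ← h]; field_simp; nlinarith
  · rw [klTerm]
    have h1 : log (a / b) ≤ a / b - 1 := log_le_sub_one_of_pos (by positivity)
    rw [log_div h.ne' hb.ne'] at h1
    have h2 : a * (log a - log b) ≤ a * (a / b - 1) := by gcongr
    have h3 : a * (a / b - 1) - a + b = (a - b) ^ 2 / b := by field_simp; ring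
    linarith

lemma abs_entropy_taylor {s : ℝ} (hs : |s| ≤ 1 / 2) :
    |(1 + s) * log (1 + s) - s - s ^ 2 / 2| ≤ 4 * |s| ^ 3 := by
  have h := abs_log_sub_add_sum_range_le (x := -s) (by rw [abs_neg]; linarith) 2
  simp only [Finset.sum_range_succ, Finset.sum_range_zero, abs_neg, sub_neg_eq_add] at h
  norm_num at h
  have h3 : |s| ^ 3 / (1 - |s|) ≤ 2 * |s| ^ 3 := by
    rw [div_le_iff₀ (by linarith)]
    nlinarith [pow_nonneg (abs_nonneg s) 3]
  set e := -s + s ^ 2 / 2 + log (1 + s) with he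
  have he2 : |e| ≤ 2 * |s| ^ 3 := h.trans h3
  have e1 : (1 + s) * log (1 + s) - s - s ^ 2 / 2 = - s ^ 3 / 2 + (1 + s) * e := by
    rw [he]; ring
  rw [e1]
  have h4 : |1 + s| ≤ 3 / 2 := by
    rw [abs_le] at *; constructor <;> linarith [hs.1, hs.2]
  calc |(-s ^ 3 / 2 + (1 + s) * e)| ≤ |-s ^ 3 / 2| + |(1 + s) * e| := abs_add_le _ _
    _ = |s| ^ 3 / 2 + |1 + s| * |e| := by rw [abs_mul, abs_div, abs_neg, abs_pow]; norm_num
    _ ≤ |s| ^ 3 / 2 + 3 / 2 * (2 * |s| ^ 3) := by gcongr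
    _ ≤ 4 * |s| ^ 3 := by nlinarith [pow_nonneg (abs_nonneg s) 3]

/-- Local quadratic behaviour of the Kullback–Leibler divergence on the diffusive scale. -/
lemma tendsto_klTerm {ι : Type*} {l : Filter ι} {n y : ι → ℝ} {a y0 x : ℝ} (ha : 0 < a)
    (hn : Tendsto n l atTop) (hy : Tendsto y l (𝓝 y0)) :
    Tendsto (fun i => n i ^ 2 * klTerm (a + y i / n i) (a + x / n i)) l
      (𝓝 ((y0 - x) ^ 2 / (2 * a))) := by
  have hp : Tendsto (fun i => a + x / n i) l (𝓝 a) := by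
    simpa using tendsto_const_nhds.add (Tendsto.div_atTop tendsto_const_nhds hn)
  have hs : Tendsto (fun i => (y i - x) / n i / (a + x / n i)) l (𝓝 0) := by
    have := (Tendsto.div_atTop (hy.sub_const x) hn).div hp ha.ne'
    rw [zero_div] at this
    exact this
  have hmain : Tendsto (fun i => (y i - x) ^ 2 / (2 * (a + x / n i))) l
      (𝓝 ((y0 - x) ^ 2 / (2 * a))) :=
    ((hy.sub_const x).pow 2).div (hp.const_mul 2) (by positivity)
  have herr : Tendsto (fun i => 4 * (|y i - x| ^ 3 / n i / (a + x / n i) ^ 2)) l (𝓝 0) := by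
    have := ((Tendsto.div_atTop ((hy.sub_const x).abs.pow 3) hn).div (hp.pow 2)
      (by positivity)).const_mul 4
    simpa using this
  have hdiff : Tendsto (fun i => n i ^ 2 * klTerm (a + y i / n i) (a + x / n i)
      - (y i - x) ^ 2 / (2 * (a + x / n i))) l (𝓝 0) := by
    apply squeeze_zero_norm' _ herr
    filter_upwards [hn.eventually_gt_atTop 0, hp.eventually (lt_mem_nhds ha),
      hs.eventually (Metric.closedBall_mem_nhds 0 (by norm_num : (0:ℝ) < 1 / 2))] with i hi hpi hsi
    rw [dist_zero_right, norm_eq_abs] at hsi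
    set p := a + x / n i with hpdef
    set s := (y i - x) / n i / p with hsdef
    have hm : a + y i / n i = p * (1 + s) := by
      rw [hsdef]; field_simp; rw [hpdef]; field_simp; ring
    have h1s : 0 < 1 + s := by rw [abs_le] at hsi; linarith [hsi.1]
    have hk : klTerm (a + y i / n i) p = p * ((1 + s) * log (1 + s) - s) := by
      rw [hm, klTerm, log_mul hpi.ne' h1s.ne']; ring
    have hys : y i - x = s * p * n i := by rw [hsdef]; field_simp
    have e : n i ^ 2 * klTerm (a + y i / n i) p - (y i - x) ^ 2 / (2 * p)
        = n i ^ 2 * p * ((1 + s) * log (1 + s) - s - s ^ 2 / 2) := by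
      rw [hk, hys]; field_simp
    rw [e, norm_eq_abs, abs_mul, abs_of_pos (by positivity)]
    calc _ ≤ n i ^ 2 * p * (4 * |s| ^ 3) := by gcongr; exact abs_entropy_taylor hsi
      _ = _ := by
        rw [hys, abs_mul, abs_mul, abs_of_pos hi, abs_of_pos hpi]; field_simp
  simpa using hdiff.add hmain

/-! ### Gaussian integrals -/

lemma integrable_exp_neg_mul_sq_sum {d : ℕ} {b : ℝ} (hb : 0 < b) :
    Integrable (fun x : Fin d → ℝ => exp (-b * ∑ k, x k ^ 2)) := by
  have := Integrable.fintype_prod (μ := fun _ : Fin d => (volume : Measure ℝ))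
    (f := fun _ t => exp (-b * t ^ 2)) (fun _ => integrable_exp_neg_mul_sq hb)
  simp only [Finset.mul_sum, exp_sum]
  exact this

lemma integral_exp_neg_half_sq_sum (d : ℕ) :
    ∫ x : Fin d → ℝ, exp (-(1 / 2) * ∑ k, x k ^ 2) = √((2 * π) ^ d) := by
  have := integral_fintype_prod_volume_eq_prod (ι := Fin d) (𝕜 := ℝ)
    (fun (_ : Fin d) (t : ℝ) => exp (-(1 / 2) * t ^ 2))
  simp only [Finset.mul_sum, exp_sum]
  rw [this]
  simp only [integral_gaussian, Finset.prod_const, Finset.card_univ, Fintype.card_fin]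
  rw [show π / (1 / 2) = 2 * π by ring, sqrt_eq_rpow, sqrt_eq_rpow, ← rpow_natCast, ← rpow_natCast,
    ← rpow_mul (by positivity), ← rpow_mul (by positivity),
    mul_comm (1 / 2 : ℝ)]

open scoped MatrixOrder in
lemma exists_eq_transpose_mul_self {d : ℕ} {B : Matrix (Fin d) (Fin d) ℝ} (hB : B.PosDef) :
    ∃ T : Matrix (Fin d) (Fin d) ℝ, B = Tᵀ * T := by
  obtain ⟨T, hT⟩ := CStarAlgebra.nonneg_iff_eq_star_mul_self.mp hB.posSemidef.nonneg
  exact ⟨T, by rw [hT, Matrix.star_eq_conjTranspose, Matrix.conjTranspose_eq_transpose_of_trivial]⟩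

/-- The centred Gaussian integral with precision matrix `B`. -/
lemma integral_exp_neg_half_posDef {d : ℕ} {B : Matrix (Fin d) (Fin d) ℝ} (hB : B.PosDef) :
    ∫ x : Fin d → ℝ, exp (-(1 / 2) * (x ⬝ᵥ B *ᵥ x)) = √((2 * π) ^ d / B.det) := by
  obtain ⟨T, hT⟩ := exists_eq_transpose_mul_self hB
  have hdet : B.det = T.det ^ 2 := by rw [hT, Matrix.det_mul, Matrix.det_transpose, sq]
  have hT0 : T.det ≠ 0 := by
    intro h
    have := hB.det_pos
    rw [hdet, h] at this
    norm_num at this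
  have hquad : ∀ x : Fin d → ℝ, x ⬝ᵥ B *ᵥ x = ∑ k, (Matrix.toLin' T x) k ^ 2 := by
    intro x
    rw [hT, ← Matrix.mulVec_mulVec, Matrix.dotProduct_mulVec, Matrix.vecMul_transpose]
    simp [dotProduct, sq]
  have hcont : Continuous (Matrix.toLin' T) := LinearMap.continuous_on_pi _
  have h1 : ∫ x : Fin d → ℝ, exp (-(1 / 2) * ∑ k, (Matrix.toLin' T x) k ^ 2)
      = ∫ x, exp (-(1 / 2) * ∑ k, x k ^ 2) ∂(Measure.map (Matrix.toLin' T) volume) := by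
    rw [integral_map hcont.measurable.aemeasurable]
    exact Continuous.aestronglyMeasurable (by fun_prop)
  simp only [hquad]
  rw [h1, Real.map_matrix_volume_pi_eq_smul_volume_pi hT0, integral_smul_measure,
    integral_exp_neg_half_sq_sum, ENNReal.toReal_ofReal (abs_nonneg _), hdet,
    sqrt_div (by positivity), sqrt_sq_eq_abs, abs_inv, smul_eq_mul]
  field_simp

lemma continuous_quadForm {d : ℕ} (B : Matrix (Fin d) (Fin d) ℝ) :
    Continuous fun x : Fin d → ℝ => x ⬝ᵥ B *ᵥ x := by
  unfold dotProduct Matrix.mulVec dotProduct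
  fun_prop

lemma quadForm_smul {d : ℕ} (B : Matrix (Fin d) (Fin d) ℝ) (t : ℝ) (x : Fin d → ℝ) :
    (t • x) ⬝ᵥ B *ᵥ (t • x) = t ^ 2 * (x ⬝ᵥ B *ᵥ x) := by
  rw [Matrix.mulVec_smul, smul_dotProduct, dotProduct_smul, smul_eq_mul, smul_eq_mul]; ring

lemma sum_sq_le_card_mul_norm_sq {d : ℕ} (x : Fin d → ℝ) : ∑ k, x k ^ 2 ≤ d * ‖x‖ ^ 2 := by
  calc ∑ k, x k ^ 2 ≤ ∑ _k : Fin d, ‖x‖ ^ 2 := by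
        refine Finset.sum_le_sum fun k _ => ?_
        rw [← sq_abs]
        gcongr
        exact norm_le_pi_norm x k
    _ = _ := by simp

lemma norm_sq_le_sum_sq {d : ℕ} (x : Fin d → ℝ) : ‖x‖ ^ 2 ≤ ∑ k, x k ^ 2 := by
  have h : ‖x‖ ≤ √(∑ k, x k ^ 2) := by
    rw [pi_norm_le_iff_of_nonneg (sqrt_nonneg _)]
    intro k
    rw [norm_eq_abs]
    apply abs_le_sqrt
    exact Finset.single_le_sum (f := fun k => x k ^ 2) (fun i _ => sq_nonneg _) (Finset.mem_univ k)
  calc ‖x‖ ^ 2 ≤ √(∑ k, x k ^ 2) ^ 2 := by gcongr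
    _ = _ := sq_sqrt (Finset.sum_nonneg fun i _ => sq_nonneg _)

lemma exists_quadForm_lower {d : ℕ} {B : Matrix (Fin d) (Fin d) ℝ} (hB : B.PosDef) :
    ∃ c : ℝ, 0 < c ∧ ∀ x : Fin d → ℝ, c * ∑ k, x k ^ 2 ≤ x ⬝ᵥ B *ᵥ x := by
  rcases (Metric.sphere (0 : Fin d → ℝ) 1).eq_empty_or_nonempty with he | hne
  · refine ⟨1, one_pos, fun x => ?_⟩
    have hx : x = 0 := by
      by_contra hx
      have : (‖x‖⁻¹ • x) ∈ Metric.sphere (0 : Fin d → ℝ) 1 := by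
        rw [mem_sphere_zero_iff_norm, norm_smul, norm_inv, norm_norm,
          inv_mul_cancel₀ (norm_ne_zero_iff.2 hx)]
      rw [he] at this
      exact this
    simp [hx]
  · obtain ⟨u, hu, hmin⟩ := (isCompact_sphere (0 : Fin d → ℝ) 1).exists_isMinOn hne
      (continuous_quadForm B).continuousOn
    rw [mem_sphere_zero_iff_norm] at hu
    have hu0 : u ≠ 0 := by rintro rfl; simp at hu
    have hpos : 0 < u ⬝ᵥ B *ᵥ u := by simpa using hB.dotProduct_mulVec_pos hu0
    refine ⟨(u ⬝ᵥ B *ᵥ u) / (d + 1), by positivity, fun x => ?_⟩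
    have hlow : (u ⬝ᵥ B *ᵥ u) * ‖x‖ ^ 2 ≤ x ⬝ᵥ B *ᵥ x := by
      rcases eq_or_ne x 0 with rfl | hx
      · simp
      · have hxn : 0 < ‖x‖ := norm_pos_iff.2 hx
        have hm : (‖x‖⁻¹ • x) ∈ Metric.sphere (0 : Fin d → ℝ) 1 := by
          rw [mem_sphere_zero_iff_norm, norm_smul, norm_inv, norm_norm, inv_mul_cancel₀ hxn.ne']
        have h := hmin hm
        simp only [Set.mem_ofPred_eq, quadForm_smul] at h
        calc _ ≤ (‖x‖⁻¹ ^ 2 * (x ⬝ᵥ B *ᵥ x)) * ‖x‖ ^ 2 := by gcongr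
          _ = _ := by field_simp
    have h2 : (u ⬝ᵥ B *ᵥ u) / (d + 1) * ∑ k, x k ^ 2 ≤ (u ⬝ᵥ B *ᵥ u) / (d + 1) * ((d + 1) * ‖x‖ ^ 2) := by
      have := sum_sq_le_card_mul_norm_sq x
      gcongr
      nlinarith [sq_nonneg ‖x‖]
    have h3 : (u ⬝ᵥ B *ᵥ u) / (d + 1) * ((d + 1) * ‖x‖ ^ 2) = (u ⬝ᵥ B *ᵥ u) * ‖x‖ ^ 2 := by
      field_simp
    linarith

lemma dotProduct_mulVec_symm {d : ℕ} {A : Matrix (Fin d) (Fin d) ℝ} (hA : Aᵀ = A)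
    (x y : Fin d → ℝ) : x ⬝ᵥ A *ᵥ y = y ⬝ᵥ A *ᵥ x := by
  rw [Matrix.dotProduct_mulVec, ← Matrix.mulVec_transpose, hA, dotProduct_comm]

/-- Convolution of Gaussians: the covariances `C = A⁻¹` and `S` add up to `H⁻¹`. -/
lemma gaussian_convolution {d : ℕ} {A C S H : Matrix (Fin d) (Fin d) ℝ} (hA : A.PosDef)
    (hS : S.PosDef) (hCA : C * A = 1) (hCSH : (C + S) * H = 1) (y : Fin d → ℝ) :
    ∫ x : Fin d → ℝ, exp (-(1 / 2) * ((y - x) ⬝ᵥ A *ᵥ (y - x))) *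
      (exp (-(1 / 2) * (x ⬝ᵥ S⁻¹ *ᵥ x)) / √((2 * π) ^ d * S.det))
      = √(H.det * C.det) * exp (-(1 / 2) * (y ⬝ᵥ H *ᵥ y)) := by
  have hSdet := hS.det_pos
  have hBS : S⁻¹ * S = 1 := Matrix.nonsing_inv_mul _ hSdet.ne'.isUnit
  have hSB : S * S⁻¹ = 1 := Matrix.mul_nonsing_inv _ hSdet.ne'.isUnit
  have hAC : A * C = 1 := mul_eq_one_comm.1 hCA
  have hAt : Aᵀ = A := by
    simpa [Matrix.IsHermitian, Matrix.conjTranspose_eq_transpose_of_trivial] using hA.isHermitian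
  set P := A + S⁻¹ with hP
  have hPpd : P.PosDef := hA.add hS.inv
  have hPt : Pᵀ = P := by
    simpa [Matrix.IsHermitian, Matrix.conjTranspose_eq_transpose_of_trivial] using hPpd.isHermitian
  have hPfac : P = A * (C + S) * S⁻¹ := by
    rw [mul_add, add_mul, hAC, one_mul, mul_assoc, hSB, mul_one, add_comm]
  -- Completing the square in `x`: the exponent is minimal at `z = S H y`, with precision `P`.
  set z := (S * H) *ᵥ y with hz
  have hPz : P *ᵥ z = A *ᵥ y := by
    rw [hz, Matrix.mulVec_mulVec, hPfac]
    congr 1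
    calc A * (C + S) * S⁻¹ * (S * H) = A * (C + S) * (S⁻¹ * S) * H := by simp only [mul_assoc]
      _ = A * ((C + S) * H) := by rw [hBS, mul_one, mul_assoc]
      _ = A := by rw [hCSH, mul_one]
  have hASH : A * (S * H) = A - H := by
    have : S * H = 1 - C * H := by rw [← hCSH]; simp [add_mul]
    rw [this, mul_sub, mul_one, ← mul_assoc, hAC, one_mul]
  have hzAy : z ⬝ᵥ A *ᵥ y = y ⬝ᵥ A *ᵥ y - y ⬝ᵥ H *ᵥ y := by
    rw [dotProduct_mulVec_symm hAt, hz, Matrix.mulVec_mulVec, hASH, Matrix.sub_mulVec,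
      dotProduct_sub]
  have hsq : ∀ x, (y - x) ⬝ᵥ A *ᵥ (y - x) + x ⬝ᵥ S⁻¹ *ᵥ x
      = (x - z) ⬝ᵥ P *ᵥ (x - z) + y ⬝ᵥ H *ᵥ y := by
    intro x
    have h1 : (x - z) ⬝ᵥ P *ᵥ (x - z) = x ⬝ᵥ P *ᵥ x - 2 * (x ⬝ᵥ A *ᵥ y) + z ⬝ᵥ A *ᵥ y := by
      simp only [Matrix.mulVec_sub, dotProduct_sub, sub_dotProduct]
      rw [dotProduct_mulVec_symm hPt z x, hPz]; ring
    have h2 : (y - x) ⬝ᵥ A *ᵥ (y - x) = y ⬝ᵥ A *ᵥ y - 2 * (x ⬝ᵥ A *ᵥ y) + x ⬝ᵥ A *ᵥ x := by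
      simp only [Matrix.mulVec_sub, dotProduct_sub, sub_dotProduct]
      rw [dotProduct_mulVec_symm hAt y x]; ring
    rw [h1, h2, hzAy, hP, Matrix.add_mulVec, dotProduct_add]; ring
  have hInt : ∀ x, exp (-(1 / 2) * ((y - x) ⬝ᵥ A *ᵥ (y - x))) *
      (exp (-(1 / 2) * (x ⬝ᵥ S⁻¹ *ᵥ x)) / √((2 * π) ^ d * S.det))
      = exp (-(1 / 2) * ((x - z) ⬝ᵥ P *ᵥ (x - z))) *
        (exp (-(1 / 2) * (y ⬝ᵥ H *ᵥ y)) / √((2 * π) ^ d * S.det)) := by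
    intro x
    rw [← mul_div_assoc, ← mul_div_assoc, ← exp_add, ← exp_add, ← mul_add, ← mul_add, hsq]
  simp only [hInt]
  rw [integral_mul_const,
    integral_sub_right_eq_self (fun x => exp (-(1 / 2) * (x ⬝ᵥ P *ᵥ x))) z,
    integral_exp_neg_half_posDef hPpd]
  have hCdet : C.det * A.det = 1 := by rw [← Matrix.det_mul, hCA, Matrix.det_one]
  have hHdet : (C + S).det * H.det = 1 := by rw [← Matrix.det_mul, hCSH, Matrix.det_one]
  have hPdet : P.det * S.det = A.det * (C + S).det := by
    have hBdet : S⁻¹.det * S.det = 1 := by rw [← Matrix.det_mul, hBS, Matrix.det_one]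
    rw [hPfac, Matrix.det_mul, mul_assoc, hBdet, mul_one, Matrix.det_mul]
  have hPS : P.det * S.det * (H.det * C.det) = 1 := by
    rw [hPdet]; linear_combination (A.det * C.det) * hHdet + hCdet
  have hfin : √((2 * π) ^ d / P.det) / √((2 * π) ^ d * S.det) = √(H.det * C.det) := by
    have hPpos := hPpd.det_pos
    rw [← sqrt_div (by positivity)]
    congr 1
    rw [eq_comm, eq_div_iff (by positivity), eq_div_iff (by positivity)]
    linear_combination ((2 * π) ^ d) * hPS
  rw [← hfin]; ring

/-! ### The simplex in reduced coordinates -/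

/-- The point of the simplex with first coordinates `x`. -/
noncomputable def full {d : ℕ} (x : Fin d → ℝ) : Fin (d + 1) → ℝ := Fin.snoc x (1 - ∑ k, x k)

/-- The tangent vector (coordinate sum zero) with first coordinates `x`. -/
noncomputable def tang {d : ℕ} (x : Fin d → ℝ) : Fin (d + 1) → ℝ := Fin.snoc x (-∑ k, x k)

/-- The reduced simplex. -/
def redSimplex (d : ℕ) : Set (Fin d → ℝ) := {x | (∀ k, 0 ≤ x k) ∧ ∑ k, x k ≤ 1}

@[simp] lemma full_castSucc {d : ℕ} (x : Fin d → ℝ) (k : Fin d) : full x k.castSucc = x k := by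
  simp [full]

@[simp] lemma full_last {d : ℕ} (x : Fin d → ℝ) : full x (Fin.last d) = 1 - ∑ k, x k := by
  simp [full]

@[simp] lemma tang_castSucc {d : ℕ} (x : Fin d → ℝ) (k : Fin d) : tang x k.castSucc = x k := by
  simp [tang]

@[simp] lemma tang_last {d : ℕ} (x : Fin d → ℝ) : tang x (Fin.last d) = - ∑ k, x k := by
  simp [tang]

lemma sum_full {d : ℕ} (x : Fin d → ℝ) : ∑ k, full x k = 1 := by
  simp [Fin.sum_univ_castSucc]

lemma sum_tang {d : ℕ} (x : Fin d → ℝ) : ∑ k, tang x k = 0 := by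
  simp [Fin.sum_univ_castSucc]

lemma full_add {d : ℕ} (x y : Fin d → ℝ) (k : Fin (d + 1)) :
    full (x + y) k = full x k + tang y k := by
  refine Fin.lastCases ?_ (fun i => ?_) k
  · simp [Finset.sum_add_distrib]; ring
  · simp

lemma tang_smul {d : ℕ} (t : ℝ) (x : Fin d → ℝ) (k : Fin (d + 1)) :
    tang (t • x) k = t * tang x k := by
  refine Fin.lastCases ?_ (fun i => ?_) k
  · simp [Finset.mul_sum]
  · simp

lemma tang_sub {d : ℕ} (x y : Fin d → ℝ) (k : Fin (d + 1)) :
    tang (x - y) k = tang x k - tang y k := by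
  refine Fin.lastCases ?_ (fun i => ?_) k
  · simp; ring
  · simp

lemma continuous_tang {d : ℕ} (k : Fin (d + 1)) : Continuous fun x : Fin d → ℝ => tang x k := by
  refine Fin.lastCases ?_ (fun i => ?_) k
  · simp only [tang_last]; fun_prop
  · simp only [tang_castSucc]; fun_prop

lemma continuous_full {d : ℕ} (k : Fin (d + 1)) : Continuous fun x : Fin d → ℝ => full x k := by
  refine Fin.lastCases ?_ (fun i => ?_) k
  · simp only [full_last]; fun_prop
  · simp only [full_castSucc]; fun_prop

lemma full_nonneg {d : ℕ} {x : Fin d → ℝ} (hx : x ∈ redSimplex d) (k : Fin (d + 1)) :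
    0 ≤ full x k := by
  refine Fin.lastCases ?_ (fun i => ?_) k
  · simpa using hx.2
  · simpa using hx.1 i

lemma mem_redSimplex_of_full_nonneg {d : ℕ} {x : Fin d → ℝ} (hx : ∀ k, 0 ≤ full x k) :
    x ∈ redSimplex d :=
  ⟨fun k => by simpa using hx k.castSucc, by simpa using hx (Fin.last d)⟩

lemma full_init {d : ℕ} {m : Fin (d + 1) → ℝ} (hm : ∑ k, m k = 1) :
    full (fun k : Fin d => m k.castSucc) = m := by
  ext k
  refine Fin.lastCases ?_ (fun i => ?_) k
  · rw [Fin.sum_univ_castSucc] at hm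
    simp; linarith
  · simp

lemma le_one_of_sum {n : ℕ} {m : Fin n → ℝ} (h0 : ∀ k, 0 ≤ m k) (h1 : ∑ k, m k = 1) (k : Fin n) :
    m k ≤ 1 := by
  rw [← h1]; exact Finset.single_le_sum (fun i _ => h0 i) (Finset.mem_univ k)

lemma isCompact_redSimplex (d : ℕ) : IsCompact (redSimplex d) := by
  apply Metric.isCompact_of_isClosed_isBounded
  · have : redSimplex d = (⋂ k, {x : Fin d → ℝ | 0 ≤ x k}) ∩ {x | ∑ k, x k ≤ 1} := by
      ext x; simp [redSimplex]
    rw [this]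
    exact (isClosed_iInter fun k => isClosed_le continuous_const (by fun_prop)).inter
      (isClosed_le (by fun_prop) continuous_const)
  · refine (Metric.isBounded_Icc (0 : Fin d → ℝ) 1).subset fun x hx => ?_
    refine ⟨fun k => hx.1 k, fun k => ?_⟩
    have := le_one_of_sum (full_nonneg hx) (sum_full x) k.castSucc
    simpa using this

/-- Interior points of the reduced simplex have strictly positive coordinates: otherwise a small
displacement decreasing the vanishing coordinate would leave the simplex. -/
lemma full_pos_of_mem_interior {d : ℕ} (hd : 1 ≤ d) {x : Fin d → ℝ}
    (hx : x ∈ interior (redSimplex d)) (k : Fin (d + 1)) : 0 < full x k := by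
  have key : ∀ v : Fin d → ℝ, ∃ t : ℝ, 0 < t ∧ x + t • v ∈ redSimplex d := by
    intro v
    have hc : ContinuousAt (fun t : ℝ => x + t • v) 0 := by fun_prop
    have h1 : ∀ᶠ t : ℝ in 𝓝 0, x + t • v ∈ redSimplex d := by
      apply hc
      simpa using mem_interior_iff_mem_nhds.1 hx
    obtain ⟨t, ht, h0⟩ := ((h1.filter_mono nhdsWithin_le_nhds).and
      (self_mem_nhdsWithin : Set.Ioi (0 : ℝ) ∈ 𝓝[>] 0)).exists
    exact ⟨t, h0, ht⟩
  obtain ⟨v, hv⟩ : ∃ v : Fin d → ℝ, tang v k < 0 := by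
    refine Fin.lastCases ?_ (fun i => ?_) k
    · refine ⟨fun _ => 1, ?_⟩
      simp; omega
    · exact ⟨fun _ => -1, by simp⟩
  obtain ⟨t, ht, hmem⟩ := key v
  have h := full_nonneg hmem k
  rw [full_add, tang_smul] at h
  nlinarith

/-! ### The multinomial covariance matrix -/

/-- Covariance of one categorical variable with probabilities `full x`, in reduced coordinates. -/
noncomputable def covMat {d : ℕ} (x : Fin d → ℝ) : Matrix (Fin d) (Fin d) ℝ :=
  Matrix.diagonal x - Matrix.of fun k l => x k * x l

/-- The inverse of `covMat x`, given by the Sherman–Morrison formula. -/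
noncomputable def precMat {d : ℕ} (x : Fin d → ℝ) : Matrix (Fin d) (Fin d) ℝ :=
  Matrix.diagonal (fun k => (x k)⁻¹) + Matrix.of fun _ _ => (1 - ∑ k, x k)⁻¹

lemma precMat_quadForm {d : ℕ} (x u : Fin d → ℝ) :
    u ⬝ᵥ precMat x *ᵥ u = ∑ k, tang u k ^ 2 / full x k := by
  rw [Fin.sum_univ_castSucc, precMat, Matrix.add_mulVec, dotProduct_add]
  congr 1
  · simp only [dotProduct, Matrix.mulVec_diagonal, tang_castSucc, full_castSucc]
    exact Finset.sum_congr rfl fun k _ => by ring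
  · simp only [dotProduct, Matrix.mulVec, Matrix.of_apply, tang_last, full_last, ← Finset.mul_sum,
      ← Finset.sum_mul]
    ring

lemma precMat_posDef {d : ℕ} {x : Fin d → ℝ} (hx : ∀ k, 0 < full x k) : (precMat x).PosDef := by
  refine Matrix.PosDef.of_dotProduct_mulVec_pos ?_ fun u hu => ?_
  · rw [Matrix.IsHermitian, Matrix.conjTranspose_eq_transpose_of_trivial, precMat,
      Matrix.transpose_add, Matrix.diagonal_transpose]
    rfl
  · simp only [star_trivial]
    rw [precMat_quadForm]
    obtain ⟨i, hi⟩ := Function.ne_iff.1 hu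
    refine Finset.sum_pos' (fun k _ => by have := hx k; positivity) ⟨i.castSucc, Finset.mem_univ _, ?_⟩
    have h1 := hx i.castSucc
    have h2 : 0 < tang u i.castSucc ^ 2 := by
      rw [tang_castSucc]; exact sq_pos_of_ne_zero hi
    positivity

lemma covMat_mul_precMat {d : ℕ} {x : Fin d → ℝ} (hx : ∀ k, 0 < full x k) :
    covMat x * precMat x = 1 := by
  have hl : (1 - ∑ k, x k) ≠ 0 := by have := hx (Fin.last d); rw [full_last] at this; exact this.ne'
  have hk : ∀ k, x k ≠ 0 := fun k => by
    have := hx k.castSucc; rw [full_castSucc] at this; exact this.ne'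
  ext i j
  have e : (covMat x * precMat x) i j =
      ∑ l, ((if i = l then x i else 0) - x i * x l) *
        ((if l = j then (x l)⁻¹ else 0) + (1 - ∑ k, x k)⁻¹) := by
    simp [covMat, precMat, Matrix.mul_apply, Matrix.diagonal_apply]
  rw [e]
  simp only [sub_mul, mul_add, Finset.sum_sub_distrib, Finset.sum_add_distrib, ite_mul, zero_mul,
    mul_ite, mul_zero, Finset.sum_ite_eq, Finset.sum_ite_eq', Finset.mem_univ, if_true,
    ← Finset.sum_mul, ← Finset.mul_sum, Matrix.one_apply]
  have h1 : x i * x j * (x j)⁻¹ = x i := by field_simp [hk j]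
  rw [h1]
  by_cases hij : i = j
  · subst hij
    simp only [if_true]
    field_simp [hk i]
    ring
  · simp only [hij, if_false]
    field_simp
    ring

lemma det_covMat {d : ℕ} (x : Fin d → ℝ) : (covMat x).det = ∏ k, full x k := by
  have h : covMat x = Matrix.diagonal x *
      (1 + Matrix.replicateCol Unit (fun _ : Fin d => (-1 : ℝ)) * Matrix.replicateRow Unit x) := by
    ext i j
    rw [Matrix.diagonal_mul]
    by_cases hij : i = j
    · subst hij
      simp [covMat, Matrix.mul_apply]; ring
    · simp [covMat, Matrix.mul_apply, hij]
  rw [h, Matrix.det_mul, Matrix.det_diagonal, Matrix.det_one_add_replicateCol_mul_replicateRow,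
    Fin.prod_univ_castSucc]
  simp [dotProduct]
  left; ring

/-! ### Second-order expansion and global bounds for the free energy -/

/-- Second-order Taylor expansion at a critical point, requiring no more than differentiability of
the derivative there. -/
lemma taylor_two {E : Type*} [NormedAddCommGroup E] [NormedSpace ℝ E] {g : E → ℝ} {a : E}
    {B : E →L[ℝ] E →L[ℝ] ℝ} (hg : ∀ᶠ x in 𝓝 a, DifferentiableAt ℝ g x)
    (h0 : fderiv ℝ g a = 0) (hB : HasFDerivAt (fderiv ℝ g) B a) {ε : ℝ} (hε : 0 < ε) :
    ∃ r > 0, ∀ h : E, ‖h‖ < r → |g (a + h) - g a - B h h / 2| ≤ ε * ‖h‖ ^ 2 := by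
  have h1 := hB.isLittleO.def hε
  obtain ⟨r, hr, hball⟩ := Metric.eventually_nhds_iff.1 (hg.and h1)
  refine ⟨r, hr, fun h hh => ?_⟩
  -- Mean value inequality along the segment from `a` to `a + h`.
  set φ : ℝ → ℝ := fun t => g (a + t • h) - t ^ 2 * (B h h / 2) with hφ
  have hmem : ∀ t ∈ Set.Icc (0 : ℝ) 1, dist (a + t • h) a < r := by
    intro t ht
    rw [dist_eq_norm, add_sub_cancel_left, norm_smul, norm_eq_abs, abs_of_nonneg ht.1]
    nlinarith [ht.2, norm_nonneg h]
  have hder : ∀ t ∈ Set.Icc (0 : ℝ) 1,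
      HasDerivAt φ (fderiv ℝ g (a + t • h) h - t * B h h) t := by
    intro t ht
    have hd := (hball (hmem t ht)).1.hasFDerivAt
    have hline : HasDerivAt (fun t : ℝ => a + t • h) h t := by
      simpa using ((hasDerivAt_id t).smul_const h).const_add a
    have h2 := hd.comp_hasDerivAt t hline
    have h3 : HasDerivAt (fun t : ℝ => t ^ 2 * (B h h / 2)) (t * B h h) t := by
      have := (hasDerivAt_pow 2 t).mul_const (B h h / 2)
      refine this.congr_deriv ?_
      simp; ring
    exact h2.sub h3
  have hbound : ∀ t ∈ Set.Ico (0 : ℝ) 1, ‖fderiv ℝ g (a + t • h) h - t * B h h‖ ≤ ε * ‖h‖ ^ 2 := by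
    intro t ht
    have ht' : t ∈ Set.Icc (0 : ℝ) 1 := ⟨ht.1, ht.2.le⟩
    have h4 := (hball (hmem t ht')).2
    rw [h0, sub_zero, add_sub_cancel_left] at h4
    have e : fderiv ℝ g (a + t • h) h - t * B h h = (fderiv ℝ g (a + t • h) - B (t • h)) h := by
      simp
    rw [e]
    refine (ContinuousLinearMap.le_opNorm _ _).trans ?_
    have h5 : ‖t • h‖ ≤ ‖h‖ := by
      rw [norm_smul, norm_eq_abs, abs_of_nonneg ht.1]
      nlinarith [ht.2, norm_nonneg h]
    calc _ ≤ ε * ‖t • h‖ * ‖h‖ := by gcongr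
      _ ≤ ε * ‖h‖ * ‖h‖ := by gcongr
      _ = _ := by ring
  have := norm_image_sub_le_of_norm_deriv_le_segment_01'
    (fun t ht => (hder t ht).hasDerivWithinAt) hbound
  simpa [hφ, norm_eq_abs, sub_right_comm] using this

lemma bilin_eq_quadForm {d : ℕ} (B : (Fin d → ℝ) →L[ℝ] (Fin d → ℝ) →L[ℝ] ℝ)
    (A : Matrix (Fin d) (Fin d) ℝ) (hA : ∀ k l, A k l = B (Pi.single k 1) (Pi.single l 1))
    (h : Fin d → ℝ) : B h h = h ⬝ᵥ A *ᵥ h := by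
  have hh : h = ∑ k, h k • (Pi.single k (1 : ℝ) : Fin d → ℝ) := by
    ext i; simp [Finset.sum_apply, Pi.single_apply]
  have e : B h h = ∑ k, ∑ l, h k * h l * A k l := by
    conv_lhs => rw [hh]
    simp only [map_sum, map_smul, sum_apply, smul_apply,
      smul_eq_mul, hA, Finset.mul_sum, mul_assoc]
    rw [Finset.sum_comm]
    refine Finset.sum_congr rfl fun k _ => Finset.sum_congr rfl fun l _ => by ring
  rw [e]
  simp only [dotProduct, Matrix.mulVec, Finset.mul_sum]
  refine Finset.sum_congr rfl fun k _ => Finset.sum_congr rfl fun l _ => by ring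

/-- Quadratic expansion of a `C²` function at an interior maximum, in the matrix form. -/
lemma exists_expansion {d : ℕ} {G : (Fin d → ℝ) → ℝ} {Δ : Set (Fin d → ℝ)} {a : Fin d → ℝ}
    (ha : a ∈ interior Δ) (hG : ContDiffOn ℝ 2 G (interior Δ)) (hmax : ∀ x ∈ Δ, G x ≤ G a)
    (A : Matrix (Fin d) (Fin d) ℝ)
    (hA : ∀ k l, A k l =
      -(fderiv ℝ (fun x => fderiv ℝ G x (Pi.single l 1)) a) (Pi.single k 1))
    {ε : ℝ} (hε : 0 < ε) :
    ∃ r > 0, ∀ h : Fin d → ℝ, ‖h‖ < r →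
      |G a - G (a + h) - (h ⬝ᵥ A *ᵥ h) / 2| ≤ ε * ‖h‖ ^ 2 := by
  have hnhds : interior Δ ∈ 𝓝 a := isOpen_interior.mem_nhds ha
  have hGa : ContDiffAt ℝ 2 G a := hG.contDiffAt hnhds
  have hdiff : ∀ᶠ x in 𝓝 a, DifferentiableAt ℝ G x := by
    filter_upwards [hnhds] with x hx
    exact (hG.contDiffAt (isOpen_interior.mem_nhds hx)).differentiableAt (by norm_num)
  have hcrit : fderiv ℝ G a = 0 := by
    apply IsLocalMax.fderiv_eq_zero
    filter_upwards [hnhds] with x hx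
    exact hmax x (interior_subset hx)
  have hfd : DifferentiableAt ℝ (fderiv ℝ G) a :=
    (hGa.fderiv_right (m := 1) (by norm_num)).differentiableAt (by norm_num)
  obtain ⟨r, hr, H⟩ := taylor_two hdiff hcrit hfd.hasFDerivAt hε
  refine ⟨r, hr, fun h hh => ?_⟩
  have hq := bilin_eq_quadForm (fderiv ℝ (fderiv ℝ G) a) (-A) (fun k l => by
    rw [Matrix.neg_apply, hA, neg_neg]
    have := (hfd.hasFDerivAt.clm_apply (hasFDerivAt_const (Pi.single l (1 : ℝ) : Fin d → ℝ) a))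
    rw [this.fderiv]
    simp) h
  have h2 := H h hh
  rw [hq, Matrix.neg_mulVec, dotProduct_neg] at h2
  rw [← abs_neg]
  convert h2 using 2
  ring

lemma exists_common_pos_lower {p : ℕ} (f : Fin p → ℝ) (hf : ∀ j, 0 < f j) :
    ∃ c > 0, ∀ j, c ≤ f j := by
  obtain ⟨B, hB⟩ := Finite.exists_le (fun j => (f j)⁻¹)
  refine ⟨(|B| + 1)⁻¹, by positivity, fun j => ?_⟩
  rw [inv_le_comm₀ (by positivity) (hf j)]
  have := hB j; have := le_abs_self B; linarith

/-- The free energy gap at a maximizer is at most quadratic on the whole simplex. -/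
lemma exists_gap_upper {d : ℕ} {G : (Fin d → ℝ) → ℝ} {a : Fin d → ℝ}
    (hcont : ContinuousOn G (redSimplex d))
    (A : Matrix (Fin d) (Fin d) ℝ)
    (hexp : ∃ r > 0, ∀ h : Fin d → ℝ, ‖h‖ < r →
      |G a - G (a + h) - (h ⬝ᵥ A *ᵥ h) / 2| ≤ 1 * ‖h‖ ^ 2) :
    ∃ C : ℝ, 0 ≤ C ∧ ∀ x ∈ redSimplex d, G a - G x ≤ C * ‖x - a‖ ^ 2 := by
  obtain ⟨r, hr, hexp⟩ := hexp
  obtain ⟨Q, hQ⟩ := (isCompact_sphere (0 : Fin d → ℝ) 1).exists_bound_of_continuousOn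
    (continuous_quadForm A).continuousOn
  obtain ⟨b, hb⟩ := (isCompact_redSimplex d).exists_bound_of_continuousOn hcont
  have hquad : ∀ h : Fin d → ℝ, h ⬝ᵥ A *ᵥ h ≤ |Q| * ‖h‖ ^ 2 := by
    intro h
    rcases eq_or_ne h 0 with rfl | hh
    · simp
    · have hn : 0 < ‖h‖ := norm_pos_iff.2 hh
      have h1 := hQ (‖h‖⁻¹ • h) (by
        rw [mem_sphere_zero_iff_norm, norm_smul, norm_inv, norm_norm, inv_mul_cancel₀ hn.ne'])
      rw [quadForm_smul, norm_eq_abs] at h1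
      have h2 := (le_abs_self _).trans (h1.trans (le_abs_self Q))
      calc h ⬝ᵥ A *ᵥ h = (‖h‖⁻¹ ^ 2 * (h ⬝ᵥ A *ᵥ h)) * ‖h‖ ^ 2 := by field_simp
        _ ≤ _ := by gcongr
  refine ⟨|Q| + 1 + (|G a| + |b|) / r ^ 2, by positivity, fun x hx => ?_⟩
  have hn := sq_nonneg ‖x - a‖
  have hq := abs_nonneg Q
  rcases lt_or_ge ‖x - a‖ r with h | h
  · have h1 := hexp (x - a) h
    rw [add_sub_cancel] at h1
    have h2 := (abs_le.1 h1).2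
    have h3 := hquad (x - a)
    have h4 : 0 ≤ (|G a| + |b|) / r ^ 2 * ‖x - a‖ ^ 2 := by positivity
    nlinarith
  · have h1 := (abs_le.1 ((norm_eq_abs (G x)) ▸ hb x hx)).1
    have h2 := le_abs_self b
    have h3 := le_abs_self (G a)
    have h4 : (|G a| + |b|) / r ^ 2 * r ^ 2 ≤ (|G a| + |b|) / r ^ 2 * ‖x - a‖ ^ 2 := by gcongr
    have h5 : (|G a| + |b|) / r ^ 2 * r ^ 2 = |G a| + |b| := by field_simp
    nlinarith

/-- The free energy gap dominates the squared distance to some maximizer: near the maximizers by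
the nondegenerate quadratic expansion, elsewhere by compactness. -/
lemma exists_gap_lower {d p : ℕ} {G : (Fin d → ℝ) → ℝ} {M : Fin p → Fin d → ℝ} {Gs : ℝ}
    (hp : 1 ≤ p)
    (hcont : ContinuousOn G (redSimplex d))
    (hM : ∀ j, M j ∈ redSimplex d) (hGs : ∀ j, G (M j) = Gs)
    (hmax : ∀ x ∈ redSimplex d, G x ≤ Gs)
    (honly : ∀ x ∈ redSimplex d, (∀ y ∈ redSimplex d, G y ≤ G x) → ∃ j, x = M j)
    (A : Fin p → Matrix (Fin d) (Fin d) ℝ) (hA : ∀ j, (A j).PosDef)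
    (hexp : ∀ j, ∀ ε > 0, ∃ r > 0, ∀ h : Fin d → ℝ, ‖h‖ < r →
      |G (M j) - G (M j + h) - (h ⬝ᵥ A j *ᵥ h) / 2| ≤ ε * ‖h‖ ^ 2) :
    ∃ c : ℝ, 0 < c ∧ ∀ x ∈ redSimplex d, ∃ j, c * ∑ k, (x k - M j k) ^ 2 ≤ Gs - G x := by
  choose c hc hcA using fun j => exists_quadForm_lower (hA j)
  choose r hr hexp' using fun j => hexp j (c j / 4) (by have := hc j; positivity)
  obtain ⟨c₀, hc₀, hc₀le⟩ := exists_common_pos_lower c hc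
  -- Away from the maximizers the gap is bounded below by a constant `η`.
  set K := redSimplex d \ ⋃ j, Metric.ball (M j) (r j) with hK
  have hKc : IsCompact K := (isCompact_redSimplex d).diff (isOpen_iUnion fun j => Metric.isOpen_ball)
  obtain ⟨η, hη, hηK⟩ : ∃ η > 0, ∀ x ∈ K, η ≤ Gs - G x := by
    rcases K.eq_empty_or_nonempty with he | hne
    · exact ⟨1, one_pos, fun x hx => by rw [he] at hx; exact hx.elim⟩
    · obtain ⟨z, hz, hzmax⟩ := hKc.exists_isMaxOn hne (hcont.mono Set.sdiff_subset)
      refine ⟨Gs - G z, ?_, fun x hx => by have := hzmax hx; simp at this; linarith⟩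
      by_contra hcon
      obtain ⟨j, hj⟩ := honly z hz.1 (fun y hy => by have := hmax y hy; linarith)
      apply hz.2
      rw [hj]
      exact Set.mem_iUnion.2 ⟨j, Metric.mem_ball_self (hr j)⟩
  refine ⟨min (c₀ / 4) (η / (d + 1)), by positivity, fun x hx => ?_⟩
  by_cases hxK : x ∈ K
  · refine ⟨⟨0, hp⟩, le_trans ?_ (hηK x hxK)⟩
    have h1 : ∑ k, (x k - M ⟨0, hp⟩ k) ^ 2 ≤ d := by
      calc _ ≤ ∑ _k : Fin d, (1 : ℝ) := by
            refine Finset.sum_le_sum fun k _ => ?_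
            have a1 := le_one_of_sum (full_nonneg hx) (sum_full x) k.castSucc
            have a2 := le_one_of_sum (full_nonneg (hM ⟨0, hp⟩)) (sum_full (M ⟨0, hp⟩)) k.castSucc
            have a3 := hx.1 k
            have a4 := (hM ⟨0, hp⟩).1 k
            rw [full_castSucc] at a1 a2
            rw [sq_le_one_iff_abs_le_one, abs_le]
            constructor <;> linarith
        _ = d := by simp
    calc _ ≤ η / (d + 1) * (d + 1) := by
          gcongr
          · exact min_le_right _ _
          · linarith
      _ = η := by field_simp
  · rw [hK, Set.mem_sdiff, not_and, not_not] at hxK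
    obtain ⟨j, hj⟩ := Set.mem_iUnion.1 (hxK hx)
    refine ⟨j, ?_⟩
    rw [Metric.mem_ball, dist_eq_norm] at hj
    have h1 := hexp' j (x - M j) hj
    rw [add_sub_cancel, hGs] at h1
    have h2 := (abs_le.1 h1).1
    have h3 := hcA j (x - M j)
    have h4 := norm_sq_le_sum_sq (x - M j)
    simp only [Pi.sub_apply] at h3 h4
    have h5 : min (c₀ / 4) (η / (d + 1)) ≤ c j / 4 :=
      (min_le_left _ _).trans (by have := hc₀le j; linarith)
    have h6 : 0 ≤ ∑ k, (x k - M j k) ^ 2 := Finset.sum_nonneg fun _ _ => sq_nonneg _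
    have h7 := hc j
    calc _ ≤ c j / 4 * ∑ k, (x k - M j k) ^ 2 := by gcongr
      _ ≤ Gs - G x := by nlinarith

/-! ### Empirical measures and product measures -/

/-- The empirical measure (magnetization) of a configuration. -/
noncomputable def emp {d N : ℕ} (σ : Fin N → Fin (d + 1)) : Fin (d + 1) → ℝ :=
  fun k => ((Finset.univ.filter fun i => σ i = k).card : ℝ) / N

lemma emp_nonneg {d N : ℕ} (σ : Fin N → Fin (d + 1)) (k : Fin (d + 1)) : 0 ≤ emp σ k := by
  unfold emp; positivity

/-- Sums over sites in terms of the empirical measure. -/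
lemma sum_site {d N : ℕ} (hN : 0 < N) (σ : Fin N → Fin (d + 1)) (φ : Fin (d + 1) → ℝ) :
    ∑ i, φ (σ i) = N * ∑ k, emp σ k * φ k := by
  have hN' : (N : ℝ) ≠ 0 := by positivity
  rw [← Finset.sum_fiberwise Finset.univ σ (fun i => φ (σ i)), Finset.mul_sum]
  refine Finset.sum_congr rfl fun k _ => ?_
  rw [Finset.sum_congr rfl (g := fun _ => φ k) (fun i hi => by simp at hi; rw [hi])]
  rw [Finset.sum_const, nsmul_eq_mul, emp]
  field_simp

lemma sum_emp {d N : ℕ} (hN : 0 < N) (σ : Fin N → Fin (d + 1)) : ∑ k, emp σ k = 1 := by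
  have hN' : (N : ℝ) ≠ 0 := by positivity
  have := sum_site hN σ (fun _ => 1)
  simp at this
  field_simp at this
  linarith

/-- The Shannon entropy. -/
noncomputable def shannon {d : ℕ} (m : Fin (d + 1) → ℝ) : ℝ := -∑ k, m k * log (m k)

/-- The Kullback–Leibler divergence of two probability vectors. -/
noncomputable def kl {d : ℕ} (m p : Fin (d + 1) → ℝ) : ℝ := ∑ k, klTerm (m k) (p k)

lemma prod_site_eq {d N : ℕ} (hN : 0 < N) (σ : Fin N → Fin (d + 1)) (p : Fin (d + 1) → ℝ)
    (hp : ∀ k, 0 < p k) (hp1 : ∑ k, p k = 1) :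
    ∏ i, p (σ i) = exp (-(N * shannon (emp σ))) * exp (-(N * kl (emp σ) p)) := by
  have h1 : ∏ i, p (σ i) = exp (∑ i, log (p (σ i))) := by
    rw [exp_sum]; exact Finset.prod_congr rfl fun i _ => (exp_log (hp _)).symm
  have h2 : kl (emp σ) p = - shannon (emp σ) - ∑ k, emp σ k * log (p k) := by
    have : kl (emp σ) p = ∑ k, emp σ k * log (emp σ k) - ∑ k, emp σ k * log (p k)
        - ∑ k, emp σ k + ∑ k, p k := by
      rw [← Finset.sum_sub_distrib, ← Finset.sum_sub_distrib, ← Finset.sum_add_distrib]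
      exact Finset.sum_congr rfl fun k _ => by rw [klTerm]; ring
    rw [this, sum_emp hN, hp1, shannon]; ring
  rw [h1, sum_site hN σ (fun k => log (p k)), ← exp_add, h2]
  congr 1; ring

lemma kl_nonneg {d : ℕ} {m p : Fin (d + 1) → ℝ} (hm : ∀ k, 0 ≤ m k) (hm1 : ∑ k, m k = 1)
    (hp : ∀ k, 0 < p k) (hp1 : ∑ k, p k = 1) : 0 ≤ kl m p :=
  Finset.sum_nonneg fun k _ => le_trans (by positivity)
    (klTerm_lower (hm k) (le_one_of_sum hm hm1 k) (hp k)
      (le_one_of_sum (fun k => (hp k).le) hp1 k))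

lemma kl_lower {d : ℕ} {m p : Fin (d + 1) → ℝ} (hm : ∀ k, 0 ≤ m k) (hm1 : ∑ k, m k = 1)
    (hp : ∀ k, 0 < p k) (hp1 : ∑ k, p k = 1) (k : Fin (d + 1)) : (m k - p k) ^ 2 / 4 ≤ kl m p := by
  have h : ∀ k, (m k - p k) ^ 2 / 4 ≤ klTerm (m k) (p k) := fun k =>
    klTerm_lower (hm k) (le_one_of_sum hm hm1 k) (hp k) (le_one_of_sum (fun k => (hp k).le) hp1 k)
  refine (h k).trans (Finset.single_le_sum (f := fun k => klTerm (m k) (p k))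
    (fun i _ => le_trans (by positivity) (h i)) (Finset.mem_univ k))

lemma kl_upper {d : ℕ} {m p : Fin (d + 1) → ℝ} {b : ℝ} (hb : 0 < b) (hm : ∀ k, 0 ≤ m k)
    (hp : ∀ k, b ≤ p k) : kl m p ≤ b⁻¹ * ∑ k, (m k - p k) ^ 2 := by
  rw [Finset.mul_sum]
  refine Finset.sum_le_sum fun k _ => (klTerm_upper (hm k) (hb.trans_le (hp k))).trans ?_
  rw [div_eq_inv_mul]
  gcongr
  exact hp k

lemma sum_prod_site {d N : ℕ} (p : Fin (d + 1) → ℝ) :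
    ∑ σ : Fin N → Fin (d + 1), ∏ i, p (σ i) = (∑ k, p k) ^ N := by
  rw [Fintype.sum_pow]

/-- Fourth moment bound for the fluctuations of the empirical measure under a product measure,
from the exponential moment bound `𝔼 exp (±(n_k - N p_k)/√N) ≤ e`. -/
lemma fourth_moment {d N : ℕ} (hN : 0 < N) (p : Fin (d + 1) → ℝ)
    (hp : ∀ k, 0 ≤ p k) (hp1 : ∑ k, p k = 1) (l : Fin (d + 1)) :
    ∑ σ : Fin N → Fin (d + 1), (∏ i, p (σ i)) * (√N * (emp σ l - p l)) ^ 4 ≤ 48 * exp 1 := by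
  have hNr : (0 : ℝ) < N := by positivity
  have hsN : 0 < √(N : ℝ) := sqrt_pos.2 hNr
  have hsN2 : √(N : ℝ) ^ 2 = N := sq_sqrt hNr.le
  have hsN1 : 1 ≤ √(N : ℝ) := by
    rw [one_le_sqrt]; exact_mod_cast hN
  have key : ∀ t : ℝ, t ^ 2 = (N : ℝ)⁻¹ →
      ∑ σ : Fin N → Fin (d + 1), (∏ i, p (σ i)) * exp (t * (N * (emp σ l - p l))) ≤ exp 1 := by
    intro t ht
    have ht1 : |t| ≤ 1 := by
      rw [← sq_le_one_iff_abs_le_one, ht]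
      exact inv_le_one_of_one_le₀ (by exact_mod_cast hN)
    set a : Fin (d + 1) → ℝ := fun k => t * ((if k = l then 1 else 0) - p l) with ha
    have h1 : ∀ σ : Fin N → Fin (d + 1), (∏ i, p (σ i)) * exp (t * (N * (emp σ l - p l)))
        = ∏ i, (p (σ i) * exp (a (σ i))) := by
      intro σ
      rw [Finset.prod_mul_distrib, ← exp_sum, sum_site hN σ a]
      congr 2
      have : ∑ k, emp σ k * a k = t * (emp σ l - p l) := by
        have e : ∀ k, emp σ k * a k
            = t * (if k = l then emp σ k else 0) - t * p l * emp σ k := by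
          intro k; simp only [ha]; split_ifs <;> ring
        simp only [e, Finset.sum_sub_distrib, ← Finset.mul_sum, sum_emp hN,
          Finset.sum_ite_eq', Finset.mem_univ, if_true]
        ring
      rw [this]; ring
    simp only [h1]
    rw [sum_prod_site (fun k => p k * exp (a k))]
    have hpl := le_one_of_sum hp hp1 l
    have hak : ∀ k, |a k| ≤ |t| := by
      intro k
      rw [ha, abs_mul]
      have : |(if k = l then (1 : ℝ) else 0) - p l| ≤ 1 := by
        rw [abs_le]; have := hp l
        split_ifs <;> constructor <;> linarith
      nlinarith [abs_nonneg t]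
    have h2 : ∑ k, p k * exp (a k) ≤ 1 + (N : ℝ)⁻¹ := by
      have h3 : ∀ k, p k * exp (a k) ≤ p k * (1 + a k + (N : ℝ)⁻¹) := by
        intro k
        refine mul_le_mul_of_nonneg_left ?_ (hp k)
        have h4 := abs_exp_sub_one_sub_id_le ((hak k).trans ht1)
        have h5 := (abs_le.1 h4).2
        have h6 : a k ^ 2 ≤ (N : ℝ)⁻¹ := by
          rw [← ht]; exact sq_le_sq.2 (hak k)
        linarith
      have h7 : ∑ k, p k * a k = 0 := by
        have e : ∀ k, p k * a k = t * (if k = l then p k else 0) - t * p l * p k := by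
          intro k; simp only [ha]; split_ifs <;> ring
        simp only [e, Finset.sum_sub_distrib, ← Finset.mul_sum, hp1,
          Finset.sum_ite_eq', Finset.mem_univ, if_true]
        ring
      calc _ ≤ ∑ k, p k * (1 + a k + (N : ℝ)⁻¹) := Finset.sum_le_sum fun k _ => h3 k
        _ = ∑ k, p k + ∑ k, p k * a k + (∑ k, p k) * (N : ℝ)⁻¹ := by
          rw [Finset.sum_mul, ← Finset.sum_add_distrib, ← Finset.sum_add_distrib]
          exact Finset.sum_congr rfl fun k _ => by ring
        _ = _ := by rw [h7, hp1]; ring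
    calc _ ≤ (1 + (N : ℝ)⁻¹) ^ N := by
          gcongr
          exact Finset.sum_nonneg fun k _ => mul_nonneg (hp k) (exp_pos _).le
      _ ≤ (exp (N : ℝ)⁻¹) ^ N := by
          gcongr
          rw [add_comm]; exact add_one_le_exp _
      _ = exp 1 := by rw [← exp_nat_mul, mul_inv_cancel₀ hNr.ne']
  -- The factor `24 = 4!` comes from the fourth term of the exponential series.
  have hcosh : ∀ z : ℝ, z ^ 4 ≤ 24 * (exp z + exp (-z)) := by
    intro z
    have : ∀ z : ℝ, 0 ≤ z → z ^ 4 ≤ 24 * (exp z + exp (-z)) := by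
      intro z hz
      have h1 := pow_div_factorial_le_exp z hz 4
      have h2 : ((4).factorial : ℝ) = 24 := by norm_num [Nat.factorial]
      rw [h2, div_le_iff₀ (by norm_num)] at h1
      have := exp_pos (-z)
      linarith
    rcases le_total 0 z with h | h
    · exact this z h
    · have := this (-z) (by linarith)
      rw [neg_neg] at this
      linarith [show (-z) ^ 4 = z ^ 4 by ring]
  have k1 := key (√N)⁻¹ (by rw [inv_pow, hsN2])
  have k2 := key (-(√N)⁻¹) (by rw [neg_sq, inv_pow, hsN2])
  have e1 : ∀ u : ℝ, (√(N : ℝ))⁻¹ * (N * u) = √N * u := by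
    intro u
    field_simp
    rw [hsN2]
  simp only [neg_mul, e1] at k1 k2
  calc _ ≤ ∑ σ : Fin N → Fin (d + 1), (∏ i, p (σ i)) *
        (24 * (exp (√N * (emp σ l - p l)) + exp (-(√N * (emp σ l - p l))))) := by
        refine Finset.sum_le_sum fun σ _ => mul_le_mul_of_nonneg_left (hcosh _) ?_
        exact Finset.prod_nonneg fun i _ => hp _
    _ = 24 * (∑ σ : Fin N → Fin (d + 1), (∏ i, p (σ i)) * exp (√N * (emp σ l - p l)) +
        ∑ σ : Fin N → Fin (d + 1), (∏ i, p (σ i)) * exp (-(√N * (emp σ l - p l)))) := by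
        rw [← Finset.sum_add_distrib, Finset.mul_sum]
        exact Finset.sum_congr rfl fun σ _ => by ring
    _ ≤ _ := by linarith

/-! ### The mixing Gaussian and its truncation -/

lemma sum_tang_sq_le {d : ℕ} (x : Fin d → ℝ) :
    ∑ k, tang x k ^ 2 ≤ (d + 1) * ∑ k, x k ^ 2 := by
  rw [Fin.sum_univ_castSucc]
  simp only [tang_castSucc, tang_last, neg_sq]
  have := sq_sum_le_card_mul_sum_sq (s := Finset.univ) (f := x)
  simp at this
  linarith

lemma tang_sq_le {d : ℕ} (x : Fin d → ℝ) (k : Fin (d + 1)) :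
    tang x k ^ 2 ≤ (d + 1) * ∑ k, x k ^ 2 :=
  (Finset.single_le_sum (f := fun k => tang x k ^ 2) (fun _ _ => sq_nonneg _)
    (Finset.mem_univ k)).trans (sum_tang_sq_le x)

lemma full_add_smul {d : ℕ} (a x : Fin d → ℝ) (s : ℝ) (k : Fin (d + 1)) :
    full (a + s • x) k = full a k + s * tang x k := by
  rw [full_add, tang_smul]

/-- The centered Gaussian density with covariance matrix `S`. -/
noncomputable def gaussDens {d : ℕ} (S : Matrix (Fin d) (Fin d) ℝ) (x : Fin d → ℝ) : ℝ :=
  exp (-(1 / 2) * (x ⬝ᵥ S⁻¹ *ᵥ x)) / √((2 * π) ^ d * S.det)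

lemma continuous_gaussDens {d : ℕ} (S : Matrix (Fin d) (Fin d) ℝ) :
    Continuous (gaussDens S) := by
  unfold gaussDens
  have := continuous_quadForm S⁻¹
  fun_prop

lemma gaussDens_pos {d : ℕ} {S : Matrix (Fin d) (Fin d) ℝ} (hS : S.PosDef) (x : Fin d → ℝ) :
    0 < gaussDens S x := by
  have := hS.det_pos
  unfold gaussDens
  positivity

lemma gaussDens_le {d : ℕ} {S : Matrix (Fin d) (Fin d) ℝ} (hS : S.PosDef) :
    ∃ K > 0, ∃ c > 0, ∀ x, gaussDens S x ≤ K * exp (-c * ∑ k, x k ^ 2) := by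
  have := hS.det_pos
  obtain ⟨c, hc, h⟩ := exists_quadForm_lower hS.inv
  refine ⟨(√((2 * π) ^ d * S.det))⁻¹, by positivity, c / 2, by positivity, fun x => ?_⟩
  unfold gaussDens
  rw [div_eq_inv_mul]
  refine mul_le_mul_of_nonneg_left (exp_le_exp.2 ?_) (by positivity)
  have := h x
  linarith

lemma integrable_gaussDens {d : ℕ} {S : Matrix (Fin d) (Fin d) ℝ} (hS : S.PosDef) :
    Integrable (gaussDens S) := by
  obtain ⟨K, hK, c, hc, h⟩ := gaussDens_le hS
  refine ((integrable_exp_neg_mul_sq_sum hc).const_mul K).mono'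
    (continuous_gaussDens S).aestronglyMeasurable (ae_of_all _ fun x => ?_)
  rw [norm_of_nonneg (gaussDens_pos hS x).le]
  exact h x

lemma integral_gaussDens {d : ℕ} {S : Matrix (Fin d) (Fin d) ℝ} (hS : S.PosDef) :
    ∫ x, gaussDens S x = 1 := by
  have := hS.det_pos
  unfold gaussDens
  rw [integral_div, integral_exp_neg_half_posDef hS.inv, Matrix.det_nonsing_inv,
    Ring.inverse_eq_inv', div_inv_eq_mul, div_self]
  positivity

lemma integrable_mul_gaussDens {d : ℕ} {S : Matrix (Fin d) (Fin d) ℝ} (hS : S.PosDef)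
    {φ : (Fin d → ℝ) → ℝ} (hφ : Measurable φ) {B : ℝ} (hB : ∀ x, |φ x| ≤ B) :
    Integrable fun x => φ x * gaussDens S x :=
  (integrable_gaussDens hS).bdd_mul hφ.aestronglyMeasurable (ae_of_all _ hB)

/-- A Gaussian has finite fourth moment. -/
lemma integrable_sq_mul_gaussDens {d : ℕ} {S : Matrix (Fin d) (Fin d) ℝ} (hS : S.PosDef) :
    Integrable fun x => (∑ k, x k ^ 2) ^ 2 * gaussDens S x := by
  obtain ⟨K, hK, c, hc, h⟩ := gaussDens_le hS
  refine ((integrable_exp_neg_mul_sq_sum (half_pos hc)).const_mul (K * (8 / c ^ 2))).mono'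
    ?_ (ae_of_all _ fun x => ?_)
  · have := continuous_gaussDens S
    exact Continuous.aestronglyMeasurable (by fun_prop)
  · set s := ∑ k, x k ^ 2
    have hs : 0 ≤ s := Finset.sum_nonneg fun k _ => sq_nonneg _
    rw [norm_of_nonneg (mul_nonneg (sq_nonneg _) (gaussDens_pos hS x).le)]
    have h1 := pow_div_factorial_le_exp (c / 2 * s) (by positivity) 2
    have h2 : s ^ 2 ≤ 8 / c ^ 2 * exp (c / 2 * s) := by
      have : s ^ 2 = 8 / c ^ 2 * ((c / 2 * s) ^ 2 / (Nat.factorial 2 : ℝ)) := by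
        norm_num [Nat.factorial]; field_simp; norm_num
      rw [this]; gcongr
    calc s ^ 2 * gaussDens S x ≤ (8 / c ^ 2 * exp (c / 2 * s)) * (K * exp (-c * s)) := by
          gcongr
          · exact (gaussDens_pos hS x).le
          · exact h x
      _ = K * (8 / c ^ 2) * (exp (c / 2 * s) * exp (-c * s)) := by ring
      _ = _ := by rw [← exp_add]; congr 2; ring

/-- Truncation at Euclidean norm `N ^ δ`. -/
noncomputable def trunc {d : ℕ} (δ : ℝ) (N : ℕ) (x : Fin d → ℝ) : Fin d → ℝ :=
  if √(∑ l, x l ^ 2) ≤ (N : ℝ) ^ δ then x else 0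

lemma measurable_trunc {d : ℕ} (δ : ℝ) (N : ℕ) : Measurable (trunc (d := d) δ N) := by
  unfold trunc
  refine Measurable.ite (measurableSet_le ?_ measurable_const) measurable_id measurable_const
  exact Continuous.measurable (by fun_prop)

lemma sum_trunc_sq_le {d : ℕ} (δ : ℝ) (N : ℕ) (x : Fin d → ℝ) :
    ∑ k, trunc δ N x k ^ 2 ≤ ∑ k, x k ^ 2 := by
  unfold trunc
  split_ifs
  · rfl
  · simpa using Finset.sum_nonneg fun k _ => sq_nonneg (x k)

lemma sum_trunc_sq_le_rpow {d : ℕ} (δ : ℝ) (N : ℕ) (x : Fin d → ℝ) :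
    ∑ k, trunc δ N x k ^ 2 ≤ ((N : ℝ) ^ δ) ^ 2 := by
  unfold trunc
  split_ifs with h
  · rw [← sqrt_le_left (by positivity)]; exact h
  · simpa using sq_nonneg ((N : ℝ) ^ δ)

lemma eventually_trunc_eq {d : ℕ} {δ : ℝ} (hδ : 0 < δ) (x : Fin d → ℝ) :
    ∀ᶠ N : ℕ in atTop, trunc δ N x = x := by
  have h : Tendsto (fun N : ℕ => (N : ℝ) ^ δ) atTop atTop :=
    (tendsto_rpow_atTop hδ).comp tendsto_natCast_atTop_atTop
  filter_upwards [h.eventually_ge_atTop (√(∑ l, x l ^ 2))] with N hN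
  rw [trunc, if_pos hN]

/-- The random probability vector `M + ξ / √N`. -/
noncomputable def mixVec {d : ℕ} (δ : ℝ) (a : Fin d → ℝ) (N : ℕ) (x : Fin d → ℝ) :
    Fin (d + 1) → ℝ := full (a + (√(N : ℝ))⁻¹ • trunc δ N x)

lemma sum_mixVec {d : ℕ} (δ : ℝ) (a : Fin d → ℝ) (N : ℕ) (x : Fin d → ℝ) :
    ∑ k, mixVec δ a N x k = 1 := sum_full _

lemma mixVec_apply {d : ℕ} (δ : ℝ) (a : Fin d → ℝ) (N : ℕ) (x : Fin d → ℝ) (k : Fin (d + 1)) :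
    mixVec δ a N x k = full a k + (√(N : ℝ))⁻¹ * tang (trunc δ N x) k := full_add_smul _ _ _ _

lemma measurable_mixVec {d : ℕ} (δ : ℝ) (a : Fin d → ℝ) (N : ℕ) (k : Fin (d + 1)) :
    Measurable fun x => mixVec δ a N x k := by
  simp only [mixVec_apply]
  exact (((continuous_tang k).measurable.comp (measurable_trunc δ N)).const_mul _).const_add _

/-- Since `δ < 1/2`, the truncated perturbation is eventually negligible compared with `M`. -/
lemma exists_mixVec_lower {d : ℕ} {δ : ℝ} (hδ : δ < 1 / 2) {a : Fin d → ℝ}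
    (ha : ∀ k, 0 < full a k) :
    ∃ b > 0, ∀ᶠ N : ℕ in atTop, ∀ x k, b ≤ mixVec δ a N x k := by
  obtain ⟨c, hc, hca⟩ := exists_common_pos_lower (full a) ha
  refine ⟨c / 2, by positivity, ?_⟩
  have h1 : Tendsto (fun N : ℕ => (d + 1 : ℝ) * ((N : ℝ) ^ (-(1 - 2 * δ)))) atTop (𝓝 0) := by
    rw [← mul_zero ((d : ℝ) + 1)]
    exact ((tendsto_rpow_neg_atTop (by linarith)).comp tendsto_natCast_atTop_atTop).const_mul _
  filter_upwards [h1.eventually_le_const (show 0 < (c / 2) ^ 2 by positivity),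
    eventually_gt_atTop 0] with N hN hN0 x k
  have hNr : (0 : ℝ) < N := by exact_mod_cast hN0
  have h2 : ((√(N : ℝ))⁻¹ * tang (trunc δ N x) k) ^ 2 ≤ (c / 2) ^ 2 := by
    refine le_trans ?_ hN
    rw [mul_pow, inv_pow, sq_sqrt hNr.le]
    calc (N : ℝ)⁻¹ * tang (trunc δ N x) k ^ 2
        ≤ (N : ℝ)⁻¹ * ((d + 1) * ((N : ℝ) ^ δ) ^ 2) := by
          gcongr
          refine (tang_sq_le _ k).trans ?_
          gcongr
          exact sum_trunc_sq_le_rpow δ N x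
      _ = (d + 1) * ((N : ℝ) ^ (-(1 - 2 * δ))) := by
          rw [← rpow_natCast, ← rpow_mul hNr.le, ← rpow_neg_one, mul_left_comm, ← rpow_add hNr]
          congr 2
          push_cast; ring
  have h3 := (abs_le.1 (abs_le_of_sq_le_sq h2 (by positivity))).1
  rw [mixVec_apply]
  linarith [hca k]

/-! ### Components of the mixture -/

/-- The weight of `σ` under one component of the mixture of product measures. -/
noncomputable def mixComp {d : ℕ} (δ : ℝ) (S : Matrix (Fin d) (Fin d) ℝ) (a : Fin d → ℝ) (N : ℕ)
    (σ : Fin N → Fin (d + 1)) : ℝ :=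
  ∫ x, (∏ i, mixVec δ a N x (σ i)) * gaussDens S x

/-- A component of the mixture relative to `exp (-N ent)`, as a function of the magnetization. -/
noncomputable def mixDens {d : ℕ} (δ : ℝ) (S : Matrix (Fin d) (Fin d) ℝ) (a : Fin d → ℝ) (N : ℕ)
    (m : Fin (d + 1) → ℝ) : ℝ :=
  ∫ x, exp (-(N * kl m (mixVec δ a N x))) * gaussDens S x

section
variable {d : ℕ} {δ : ℝ} {S : Matrix (Fin d) (Fin d) ℝ} {a : Fin d → ℝ} {N : ℕ} {b : ℝ}

lemma mixComp_eq (hb : 0 < b) (hN : 0 < N) (hlow : ∀ x k, b ≤ mixVec δ a N x k)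
    (σ : Fin N → Fin (d + 1)) :
    mixComp δ S a N σ = exp (-(N * shannon (emp σ))) * mixDens δ S a N (emp σ) := by
  rw [mixComp, mixDens, ← integral_const_mul]
  congr 1; ext x
  rw [prod_site_eq hN σ _ (fun k => hb.trans_le (hlow x k)) (sum_mixVec _ _ _ _)]
  ring

lemma measurable_prod_mixVec (σ : Fin N → Fin (d + 1)) :
    Measurable fun x => ∏ i, mixVec δ a N x (σ i) :=
  Finset.measurable_prod _ fun i _ => measurable_mixVec δ a N (σ i)

lemma prod_mixVec_nonneg (hb : 0 < b) (hlow : ∀ x k, b ≤ mixVec δ a N x k)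
    (σ : Fin N → Fin (d + 1)) (x : Fin d → ℝ) : 0 ≤ ∏ i, mixVec δ a N x (σ i) :=
  Finset.prod_nonneg fun _ _ => hb.le.trans (hlow x _)

lemma integrable_prod_mixVec (hS : S.PosDef) (hb : 0 < b) (hlow : ∀ x k, b ≤ mixVec δ a N x k)
    (σ : Fin N → Fin (d + 1)) :
    Integrable fun x => (∏ i, mixVec δ a N x (σ i)) * gaussDens S x := by
  refine integrable_mul_gaussDens hS (measurable_prod_mixVec σ) (B := 1) fun x => ?_
  rw [abs_of_nonneg (prod_mixVec_nonneg hb hlow σ x)]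
  exact Finset.prod_le_one (fun i _ => hb.le.trans (hlow x _)) fun i _ =>
    le_one_of_sum (fun k => hb.le.trans (hlow x k)) (sum_mixVec _ _ _ _) _

lemma sum_mixComp (hS : S.PosDef) (hb : 0 < b) (hlow : ∀ x k, b ≤ mixVec δ a N x k) :
    ∑ σ, mixComp δ S a N σ = 1 := by
  unfold mixComp
  rw [← integral_finsetSum _ fun σ _ => integrable_prod_mixVec hS hb hlow σ,
    ← integral_gaussDens hS]
  congr 1; ext x
  rw [← Finset.sum_mul, sum_prod_site, sum_mixVec, one_pow, one_mul]

lemma measurable_exp_kl (m : Fin (d + 1) → ℝ) :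
    Measurable fun x => exp (-(N * kl m (mixVec δ a N x))) := by
  unfold kl klTerm
  have := measurable_mixVec δ a N
  fun_prop

lemma exp_kl_le_one (hb : 0 < b) (hlow : ∀ x k, b ≤ mixVec δ a N x k) {m : Fin (d + 1) → ℝ}
    (hm : ∀ k, 0 ≤ m k) (hm1 : ∑ k, m k = 1) (x : Fin d → ℝ) :
    exp (-(N * kl m (mixVec δ a N x))) ≤ 1 := by
  rw [exp_le_one_iff]
  have := kl_nonneg hm hm1 (fun k => hb.trans_le (hlow x k)) (sum_mixVec _ _ _ _)
  have : 0 ≤ N * kl m (mixVec δ a N x) := by positivity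
  linarith

lemma integrable_exp_kl (hS : S.PosDef) (hb : 0 < b) (hlow : ∀ x k, b ≤ mixVec δ a N x k)
    {m : Fin (d + 1) → ℝ} (hm : ∀ k, 0 ≤ m k) (hm1 : ∑ k, m k = 1) :
    Integrable fun x => exp (-(N * kl m (mixVec δ a N x))) * gaussDens S x := by
  refine integrable_mul_gaussDens hS (measurable_exp_kl m) (B := 1) fun x => ?_
  rw [abs_of_pos (exp_pos _)]
  exact exp_kl_le_one hb hlow hm hm1 x

lemma mixDens_nonneg (hS : S.PosDef) (m : Fin (d + 1) → ℝ) : 0 ≤ mixDens δ S a N m :=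
  integral_nonneg fun x => mul_nonneg (exp_pos _).le (gaussDens_pos hS x).le

lemma mixDens_le_one (hS : S.PosDef) (hb : 0 < b) (hlow : ∀ x k, b ≤ mixVec δ a N x k)
    {m : Fin (d + 1) → ℝ} (hm : ∀ k, 0 ≤ m k) (hm1 : ∑ k, m k = 1) :
    mixDens δ S a N m ≤ 1 := by
  rw [← integral_gaussDens hS]
  refine integral_mono (integrable_exp_kl hS hb hlow hm hm1) (integrable_gaussDens hS) fun x => ?_
  exact mul_le_of_le_one_left (gaussDens_pos hS x).le (exp_kl_le_one hb hlow hm hm1 x)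

lemma sum_sq_sub_le (y t : Fin d → ℝ) :
    ∑ k, tang (y - t) k ^ 2 ≤ 2 * (d + 1) * (∑ k, y k ^ 2 + ∑ k, t k ^ 2) := by
  refine (sum_tang_sq_le _).trans ?_
  have : ∑ k, (y - t) k ^ 2 ≤ 2 * (∑ k, y k ^ 2 + ∑ k, t k ^ 2) := by
    rw [← Finset.sum_add_distrib, Finset.mul_sum]
    refine Finset.sum_le_sum fun k _ => ?_
    rw [Pi.sub_apply]
    nlinarith [sq_nonneg (y k + t k)]
  calc (d + 1 : ℝ) * ∑ k, (y - t) k ^ 2 ≤ (d + 1 : ℝ) * (2 * (∑ k, y k ^ 2 + ∑ k, t k ^ 2)) := by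
        gcongr
    _ = _ := by ring

/-- The rescaled divergence between two probability vectors at distance of order `1/√N`. -/
lemma kl_scaled_upper (hb : 0 < b) (hN : 0 < N) {y t : Fin d → ℝ}
    (hm : ∀ k, 0 ≤ full (a + (√(N : ℝ))⁻¹ • y) k) (hlow : ∀ k, b ≤ full (a + (√(N : ℝ))⁻¹ • t) k) :
    N * kl (full (a + (√(N : ℝ))⁻¹ • y)) (full (a + (√(N : ℝ))⁻¹ • t))
      ≤ b⁻¹ * ∑ k, tang (y - t) k ^ 2 := by
  have hNr : (0 : ℝ) < N := by exact_mod_cast hN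
  calc _ ≤ N * (b⁻¹ * ∑ k, (full (a + (√(N : ℝ))⁻¹ • y) k - full (a + (√(N : ℝ))⁻¹ • t) k) ^ 2) := by
        gcongr
        exact kl_upper hb hm hlow
    _ = N * (b⁻¹ * ∑ k, (N : ℝ)⁻¹ * tang (y - t) k ^ 2) := by
        congr 3; ext k
        rw [full_add_smul, full_add_smul, tang_sub, add_sub_add_left_eq_sub, ← mul_sub, mul_pow,
          inv_pow, sq_sqrt hNr.le]
    _ = _ := by rw [← Finset.mul_sum]; field_simp

end

/-- Uniform Gaussian lower bound for a mixture component. -/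
lemma exists_mixDens_lower {d : ℕ} {δ : ℝ} {S : Matrix (Fin d) (Fin d) ℝ} {a : Fin d → ℝ}
    {b : ℝ} (hS : S.PosDef) (hb : 0 < b) :
    ∃ C > 0, ∃ κ > 0, ∀ N : ℕ, 0 < N → (∀ x k, b ≤ mixVec δ a N x k) → ∀ y : Fin d → ℝ,
      (∀ k, 0 ≤ full (a + (√(N : ℝ))⁻¹ • y) k) →
      κ * exp (-C * ∑ k, y k ^ 2) ≤ mixDens δ S a N (full (a + (√(N : ℝ))⁻¹ • y)) := by
  -- The `χ²`-type bound `kl_scaled_upper` separates the dependence on `y` from that on `x`.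
  set C : ℝ := b⁻¹ * (2 * (d + 1)) with hC
  have hC0 : 0 < C := by positivity
  set κ : ℝ := ∫ x : Fin d → ℝ, exp (-C * ∑ k, x k ^ 2) * gaussDens S x with hκ
  have hInt : Integrable fun x : Fin d → ℝ => exp (-C * ∑ k, x k ^ 2) * gaussDens S x := by
    refine integrable_mul_gaussDens hS (Continuous.measurable (by fun_prop)) (B := 1) fun x => ?_
    rw [abs_of_pos (exp_pos _), exp_le_one_iff, neg_mul, neg_nonpos]
    positivity
  have hκ0 : 0 < κ := by
    rw [hκ, integral_pos_iff_support_of_nonneg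
      (fun x => mul_nonneg (exp_pos _).le (gaussDens_pos hS x).le) hInt]
    have : Function.support (fun x : Fin d → ℝ => exp (-C * ∑ k, x k ^ 2) * gaussDens S x)
        = Set.univ := by
      ext x
      simpa using (gaussDens_pos hS x).ne'
    rw [this]
    exact isOpen_univ.measure_pos volume Set.univ_nonempty
  refine ⟨C, hC0, κ, hκ0, fun N hN hlow y hy => ?_⟩
  rw [mixDens, hκ, ← integral_mul_const]
  refine integral_mono (hInt.mul_const _)
    (integrable_exp_kl hS hb hlow hy (sum_full _)) fun x => ?_
  have h1 := kl_scaled_upper hb hN hy (hlow x)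
  have h2 : b⁻¹ * ∑ k, tang (y - trunc δ N x) k ^ 2 ≤ C * (∑ k, y k ^ 2 + ∑ k, x k ^ 2) := by
    rw [hC, mul_assoc b⁻¹]
    gcongr
    refine (sum_sq_sub_le _ _).trans ?_
    have := sum_trunc_sq_le δ N x
    refine mul_le_mul_of_nonneg_left ?_ (by positivity)
    linarith
  have h3 : exp (-C * ∑ k, x k ^ 2) * exp (-C * ∑ k, y k ^ 2)
      ≤ exp (-(N * kl (full (a + (√(N : ℝ))⁻¹ • y)) (mixVec δ a N x))) := by
    rw [← exp_add, exp_le_exp]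
    rw [mixVec]
    linarith
  calc _ = exp (-C * ∑ k, x k ^ 2) * exp (-C * ∑ k, y k ^ 2) * gaussDens S x := by ring
    _ ≤ _ := mul_le_mul_of_nonneg_right h3 (gaussDens_pos hS x).le

/-- Under a mixture component, the rescaled magnetization has bounded fourth moment. -/
lemma exists_mixComp_moment {d : ℕ} {δ : ℝ} {S : Matrix (Fin d) (Fin d) ℝ} {a : Fin d → ℝ}
    {b : ℝ} (hS : S.PosDef) (hb : 0 < b) :
    ∃ C, ∀ N : ℕ, 0 < N → (∀ x k, b ≤ mixVec δ a N x k) →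
      ∑ σ, mixComp δ S a N σ * (1 + N * ∑ k, (emp σ k - full a k) ^ 2) ^ 2 ≤ C := by
  set D : ℝ := d + 1 with hD
  refine ⟨∫ x : Fin d → ℝ, (2 + 16 * D * (D * (48 * exp 1)) + 16 * D ^ 2 * (∑ k, x k ^ 2) ^ 2)
    * gaussDens S x, fun N hN hlow => ?_⟩
  have hNr : (0 : ℝ) < N := by exact_mod_cast hN
  have hsN : 0 < √(N : ℝ) := sqrt_pos.2 hNr
  have hsN2 : √(N : ℝ) ^ 2 = N := sq_sqrt hNr.le
  set V : (Fin N → Fin (d + 1)) → ℝ := fun σ => (1 + N * ∑ k, (emp σ k - full a k) ^ 2) ^ 2 with hV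
  have hpt : ∀ x σ, V σ ≤ 2 + 16 * D * ∑ k, (√N * (emp σ k - mixVec δ a N x k)) ^ 4
      + 16 * D ^ 2 * (∑ k, x k ^ 2) ^ 2 := by
    intro x σ
    set z : Fin (d + 1) → ℝ := fun k => √N * (emp σ k - mixVec δ a N x k) with hz
    set A := N * ∑ k, (emp σ k - full a k) ^ 2 with hA
    set s := ∑ k, x k ^ 2 with hs
    have hs0 : 0 ≤ s := by positivity
    have hA0 : 0 ≤ A := by positivity
    have hz0 : 0 ≤ ∑ k, z k ^ 2 := by positivity
    have hD0 : 0 < D := by positivity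
    have h1 : A ≤ 2 * ∑ k, z k ^ 2 + 2 * (D * s) := by
      have h2 : A = ∑ k, (z k + tang (trunc δ N x) k) ^ 2 := by
        rw [hA, Finset.mul_sum]
        refine Finset.sum_congr rfl fun k _ => ?_
        simp only [hz, mixVec_apply]
        have : √(N : ℝ) * (emp σ k - (full a k + (√(N : ℝ))⁻¹ * tang (trunc δ N x) k))
            + tang (trunc δ N x) k = √N * (emp σ k - full a k) := by
          field_simp; ring
        rw [this, mul_pow, hsN2]
      have h3 : A ≤ 2 * ∑ k, z k ^ 2 + 2 * ∑ k, tang (trunc δ N x) k ^ 2 := by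
        rw [h2, Finset.mul_sum, Finset.mul_sum, ← Finset.sum_add_distrib]
        refine Finset.sum_le_sum fun k _ => ?_
        nlinarith [sq_nonneg (z k - tang (trunc δ N x) k)]
      have h4 : ∑ k, tang (trunc δ N x) k ^ 2 ≤ D * s := by
        refine (sum_tang_sq_le _).trans ?_
        exact mul_le_mul_of_nonneg_left (sum_trunc_sq_le δ N x) hD0.le
      linarith
    have h5 : (∑ k, z k ^ 2) ^ 2 ≤ D * ∑ k, z k ^ 4 := by
      have := sq_sum_le_card_mul_sum_sq (s := Finset.univ) (f := fun k => z k ^ 2)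
      simp only [Finset.card_univ, Fintype.card_fin, ← pow_mul] at this
      push_cast at this
      exact this
    have h6 : A ^ 2 ≤ 8 * (∑ k, z k ^ 2) ^ 2 + 8 * (D * s) ^ 2 := by
      have : A ^ 2 ≤ (2 * ∑ k, z k ^ 2 + 2 * (D * s)) ^ 2 := by gcongr
      nlinarith [sq_nonneg (∑ k, z k ^ 2 - D * s)]
    simp only [hV]
    nlinarith [sq_nonneg (1 - A)]
  have hint2 : Integrable fun x : Fin d → ℝ =>
      (2 + 16 * D * (D * (48 * exp 1)) + 16 * D ^ 2 * (∑ k, x k ^ 2) ^ 2) * gaussDens S x := by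
    have := ((integrable_gaussDens hS).const_mul (2 + 16 * D * (D * (48 * exp 1)))).add
      ((integrable_sq_mul_gaussDens hS).const_mul (16 * D ^ 2))
    refine this.congr (ae_of_all _ fun x => ?_)
    simp only [Pi.add_apply]
    ring
  have hint1 : ∀ σ, Integrable fun x => (∏ i, mixVec δ a N x (σ i)) * gaussDens S x * V σ :=
    fun σ => (integrable_prod_mixVec hS hb hlow σ).mul_const _
  calc ∑ σ, mixComp δ S a N σ * V σ
      = ∑ σ, ∫ x, (∏ i, mixVec δ a N x (σ i)) * gaussDens S x * V σ := by
        refine Finset.sum_congr rfl fun σ _ => ?_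
        rw [mixComp, integral_mul_const]
    _ = ∫ x, ∑ σ : Fin N → Fin (d + 1), (∏ i, mixVec δ a N x (σ i)) * gaussDens S x * V σ :=
        (integral_finsetSum _ fun σ _ => hint1 σ).symm
    _ ≤ _ := by
        refine integral_mono (integrable_finsetSum _ fun σ _ => hint1 σ) hint2 fun x => ?_
        have hp0 : ∀ k, 0 ≤ mixVec δ a N x k := fun k => hb.le.trans (hlow x k)
        have h1 : ∑ σ : Fin N → Fin (d + 1), (∏ i, mixVec δ a N x (σ i)) * V σ
            ≤ 2 + 16 * D * (D * (48 * exp 1)) + 16 * D ^ 2 * (∑ k, x k ^ 2) ^ 2 := by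
          calc _ ≤ ∑ σ : Fin N → Fin (d + 1), (∏ i, mixVec δ a N x (σ i)) *
                (2 + 16 * D * ∑ k, (√N * (emp σ k - mixVec δ a N x k)) ^ 4
                  + 16 * D ^ 2 * (∑ k, x k ^ 2) ^ 2) :=
                Finset.sum_le_sum fun σ _ => mul_le_mul_of_nonneg_left (hpt x σ)
                  (prod_mixVec_nonneg hb hlow σ x)
            _ = (2 + 16 * D ^ 2 * (∑ k, x k ^ 2) ^ 2) *
                  ∑ σ : Fin N → Fin (d + 1), (∏ i, mixVec δ a N x (σ i))
                + 16 * D * ∑ k, ∑ σ : Fin N → Fin (d + 1), (∏ i, mixVec δ a N x (σ i)) *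
                  (√N * (emp σ k - mixVec δ a N x k)) ^ 4 := by
                rw [Finset.sum_comm, Finset.mul_sum, Finset.mul_sum, ← Finset.sum_add_distrib]
                refine Finset.sum_congr rfl fun σ _ => ?_
                rw [← Finset.mul_sum]
                ring
            _ ≤ (2 + 16 * D ^ 2 * (∑ k, x k ^ 2) ^ 2) * 1 + 16 * D * ∑ k : Fin (d + 1), 48 * exp 1 := by
                rw [sum_prod_site, sum_mixVec, one_pow]
                gcongr with k _
                exact fourth_moment hN _ hp0 (sum_mixVec _ _ _ _) k
            _ = _ := by
                rw [Finset.sum_const, Finset.card_univ, Fintype.card_fin, nsmul_eq_mul]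
                push_cast
                ring
        calc _ = (∑ σ : Fin N → Fin (d + 1), (∏ i, mixVec δ a N x (σ i)) * V σ) * gaussDens S x := by
              rw [Finset.sum_mul]
              exact Finset.sum_congr rfl fun σ _ => by ring
          _ ≤ _ := mul_le_mul_of_nonneg_right h1 (gaussDens_pos hS x).le

/-! ### Summability of the Gibbs weights -/

/-- The product weight of `σ` with marginals `p`, set to zero when `p` has a negative entry. -/
noncomputable def posProd {d N : ℕ} (p : Fin (d + 1) → ℝ) (σ : Fin N → Fin (d + 1)) : ℝ :=
  open Classical in if ∀ k, 0 ≤ p k then ∏ i, p (σ i) else 0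

lemma posProd_nonneg {d N : ℕ} (p : Fin (d + 1) → ℝ) (σ : Fin N → Fin (d + 1)) :
    0 ≤ posProd p σ := by
  unfold posProd
  split_ifs with h
  · exact Finset.prod_nonneg fun _ _ => h _
  · rfl

lemma sum_posProd_le {d : ℕ} (N : ℕ) {p : Fin (d + 1) → ℝ} (hp1 : ∑ k, p k = 1) :
    ∑ σ : Fin N → Fin (d + 1), posProd p σ ≤ 1 := by
  unfold posProd
  split_ifs with h
  · rw [sum_prod_site, hp1, one_pow]
  · simp

lemma integrable_posProd_mul {d N : ℕ} (a : Fin d → ℝ) (s : ℝ) {c : ℝ} (hc : 0 < c)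
    (σ : Fin N → Fin (d + 1)) :
    Integrable fun x => posProd (full (a + s • x)) σ * exp (-c * ∑ k, x k ^ 2) := by
  refine (integrable_exp_neg_mul_sq_sum hc).bdd_mul (c := 1) ?_ (ae_of_all _ fun x => ?_)
  · unfold posProd
    have hc : ∀ k, Continuous fun x : Fin d → ℝ => full (a + s • x) k := fun k =>
      (continuous_full k).comp (by fun_prop)
    refine Measurable.aestronglyMeasurable (Measurable.ite ?_ ?_ measurable_const)
    · simp only [Set.ofPred_forall]
      exact MeasurableSet.iInter fun k => measurableSet_le measurable_const (hc k).measurable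
    · exact Finset.measurable_prod _ fun i _ => (hc (σ i)).measurable
  · rw [norm_of_nonneg (posProd_nonneg _ _)]
    exact (Finset.single_le_sum (f := fun σ => posProd (full (a + s • x)) σ)
      (fun _ _ => posProd_nonneg _ _) (Finset.mem_univ σ)).trans (sum_posProd_le N (sum_full _))

lemma sq_contract_add_le {e : ℝ} (he0 : 0 ≤ e) (he1 : e ≤ 1) (y u : ℝ) :
    ((1 - e) * y + u) ^ 2 ≤ 2 * y ^ 2 + 2 * u ^ 2 := by
  have h1 : ((1 - e) * y) ^ 2 ≤ y ^ 2 := by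
    rw [mul_pow]
    have : (1 - e) ^ 2 ≤ 1 := by nlinarith
    nlinarith [sq_nonneg y]
  nlinarith [sq_nonneg ((1 - e) * y - u)]

set_option maxHeartbeats 1000000 in
/-- Uniform summability of `exp (-N ent)` against a Gaussian weight on the diffusive scale. Each
term is bounded by an average of product measures, whose parameter ranges over a small ball around
a point slightly closer to `a` than the magnetization, hence away from the boundary. -/
lemma exists_gauss_sum_bound {d : ℕ} {a : Fin d → ℝ} (ha : ∀ k, 0 < full a k) {c : ℝ}
    (hc : 0 < c) :
    ∃ C, ∀ N : ℕ, 0 < N → ∑ σ : Fin N → Fin (d + 1), exp (-(N * shannon (emp σ))) *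
      exp (-c * (N * ∑ k : Fin d, (emp σ k.castSucc - a k) ^ 2)) ≤ C := by
  obtain ⟨c₀, hc₀, hca⟩ := exists_common_pos_lower (full a) ha
  set D : ℝ := d + 1 with hD
  have hD1 : 1 ≤ D := by rw [hD]; linarith [(Nat.cast_nonneg d : (0 : ℝ) ≤ d)]
  have hD0 : 0 < D := by linarith
  -- `y` being the rescaled magnetization, the parameters are taken within `u₀` of `(1 - ε) y`. They
  -- stay above `b = ε c₀ / 2`, so the divergence costs about `(ε² / b) ∑ y² = O(ε) ∑ y²`, and the
  -- choice of `ε` makes this at most `(c / 2) ∑ y²`.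
  set ε : ℝ := min 1 (c * c₀ / (8 * D)) with hε
  have hε0 : 0 < ε := lt_min one_pos (by positivity)
  have hε1 : ε ≤ 1 := min_le_left _ _
  have hε2 : ε * (8 * D) ≤ c * c₀ := by
    rw [← le_div_iff₀ (by positivity)]; exact min_le_right _ _
  set b : ℝ := ε * c₀ / 2 with hb
  have hb0 : 0 < b := by positivity
  set u₀ : ℝ := b / D with hu₀
  have hu0 : 0 < u₀ := by positivity
  set K : ℝ := b⁻¹ * (2 * D * (D * u₀ ^ 2)) + c / 2 * (D * u₀ ^ 2) with hK
  refine ⟨((2 * u₀) ^ d)⁻¹ * (exp K * ∫ x : Fin d → ℝ, exp (-(c / 4) * ∑ k, x k ^ 2)),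
    fun N hN => ?_⟩
  have hNr : (0 : ℝ) < N := by exact_mod_cast hN
  have hsN : 0 < √(N : ℝ) := sqrt_pos.2 hNr
  have hsN2 : √(N : ℝ) ^ 2 = N := sq_sqrt hNr.le
  have hsN1 : (√(N : ℝ))⁻¹ ≤ 1 := by
    apply inv_le_one_of_one_le₀
    rw [one_le_sqrt]; exact_mod_cast hN
  have hc4 : 0 < c / 4 := by positivity
  set s : ℝ := (√(N : ℝ))⁻¹ with hs
  have hs0 : 0 < s := by positivity
  have hterm : ∀ σ : Fin N → Fin (d + 1), (2 * u₀) ^ d * (exp (-(N * shannon (emp σ))) *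
      exp (-c * (N * ∑ k : Fin d, (emp σ k.castSucc - a k) ^ 2)))
      ≤ exp K * ∫ x, posProd (full (a + s • x)) σ * exp (-(c / 4) * ∑ k, x k ^ 2) := by
    intro σ
    set y : Fin d → ℝ := fun k => √N * (emp σ k.castSucc - a k) with hy
    set L := exp (-(N * shannon (emp σ))) *
      exp (-c * (N * ∑ k : Fin d, (emp σ k.castSucc - a k) ^ 2)) with hL
    have hm : full (a + s • y) = emp σ := by
      rw [← full_init (sum_emp hN σ)]
      congr 1; ext k
      simp only [Pi.add_apply, Pi.smul_apply, smul_eq_mul, hy, hs]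
      field_simp; ring
    have hysq : N * ∑ k : Fin d, (emp σ k.castSucc - a k) ^ 2 = ∑ k, y k ^ 2 := by
      rw [Finset.mul_sum]
      exact Finset.sum_congr rfl fun k _ => by rw [hy, mul_pow, hsN2]
    -- Pointwise bound on the ball, to be averaged over it.
    have hpt : ∀ x ∈ Metric.ball ((1 - ε) • y) u₀,
        L ≤ exp K * (posProd (full (a + s • x)) σ * exp (-(c / 4) * ∑ k, x k ^ 2)) := by
      intro x hx
      set u := x - (1 - ε) • y with hu
      have hun : ‖u‖ < u₀ := by simpa [hu, dist_eq_norm] using hx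
      have hu2 : ∑ k, u k ^ 2 ≤ D * u₀ ^ 2 := by
        refine (sum_sq_le_card_mul_norm_sq u).trans ?_
        gcongr
        rw [hD]; linarith
      have hxu : x = (1 - ε) • y + u := by rw [hu]; abel
      have hlow : ∀ k, b ≤ full (a + s • x) k := by
        intro k
        have h1 : |tang u k| ≤ b := by
          refine abs_le_of_sq_le_sq ?_ hb0.le
          calc tang u k ^ 2 ≤ D * (D * u₀ ^ 2) := (tang_sq_le u k).trans (by gcongr)
            _ = b ^ 2 := by rw [hu₀]; field_simp
        have h2 : full (a + s • x) k = ε * full a k + (1 - ε) * emp σ k + s * tang u k := by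
          rw [← hm, full_add_smul, full_add_smul]
          have : tang u k = tang x k - (1 - ε) * tang y k := by
            rw [hu, tang_sub, tang_smul]
          rw [this]; ring
        have h3 : -b ≤ s * tang u k := by
          have := (abs_le.1 (show |s * tang u k| ≤ b by
            rw [abs_mul, abs_of_pos hs0]
            nlinarith [abs_nonneg (tang u k)])).1
          exact this
        have h4 : ε * c₀ ≤ ε * full a k := by gcongr; exact hca k
        have h5 : 0 ≤ (1 - ε) * emp σ k := mul_nonneg (by linarith) (emp_nonneg σ k)
        rw [h2]
        have : ε * c₀ = 2 * b := by rw [hb]; ring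
        linarith
      have hpos : posProd (full (a + s • x)) σ
          = exp (-(N * shannon (emp σ))) * exp (-(N * kl (emp σ) (full (a + s • x)))) := by
        rw [posProd, if_pos fun k => hb0.le.trans (hlow k),
          prod_site_eq hN σ _ (fun k => hb0.trans_le (hlow k)) (sum_full _)]
      have hkl : N * kl (emp σ) (full (a + s • x))
          ≤ c / 2 * ∑ k, y k ^ 2 + b⁻¹ * (2 * D * (D * u₀ ^ 2)) := by
        have h1 := kl_scaled_upper (a := a) (y := y) (t := x) hb0 hN
          (by rw [← hs, hm]; exact emp_nonneg σ) hlow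
        rw [← hs, hm] at h1
        have h2 : y - x = ε • y - u := by
          rw [hu]; ext k; simp; ring
        have h3 : ∑ k, (ε • y) k ^ 2 = ε ^ 2 * ∑ k, y k ^ 2 := by
          rw [Finset.mul_sum]
          exact Finset.sum_congr rfl fun k _ => by simp [mul_pow]
        have h4 := sum_sq_sub_le (ε • y) u
        rw [h3] at h4
        calc _ ≤ _ := h1
          _ ≤ b⁻¹ * (2 * D * (ε ^ 2 * ∑ k, y k ^ 2 + D * u₀ ^ 2)) := by
            rw [h2]; gcongr
            refine h4.trans ?_
            gcongr
          _ = b⁻¹ * (2 * D * ε ^ 2) * ∑ k, y k ^ 2 + b⁻¹ * (2 * D * (D * u₀ ^ 2)) := by ring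
          _ ≤ _ := by
            gcongr
            rw [hb, inv_mul_le_iff₀ (by positivity)]
            nlinarith
      have hx2 : ∑ k, x k ^ 2 ≤ 2 * ∑ k, y k ^ 2 + 2 * (D * u₀ ^ 2) := by
        have : ∑ k, x k ^ 2 ≤ 2 * ∑ k, y k ^ 2 + 2 * ∑ k, u k ^ 2 := by
          rw [Finset.mul_sum, Finset.mul_sum, ← Finset.sum_add_distrib]
          refine Finset.sum_le_sum fun k _ => ?_
          have hk : x k = (1 - ε) * y k + u k := by rw [hxu]; simp
          rw [hk]
          exact sq_contract_add_le hε0.le hε1 _ _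
        linarith
      rw [hpos, hL, hysq, ← exp_add, ← exp_add, ← exp_add, ← exp_add, exp_le_exp, hK]
      have : c / 4 * ∑ k, x k ^ 2 ≤ c / 4 * (2 * ∑ k, y k ^ 2 + 2 * (D * u₀ ^ 2)) := by gcongr
      linarith
    have hvol : (volume : Measure (Fin d → ℝ)).real (Metric.ball ((1 - ε) • y) u₀)
        = (2 * u₀) ^ d := by
      rw [Measure.real, Real.volume_pi_ball _ hu0, ENNReal.toReal_ofReal (by positivity),
        Fintype.card_fin]
    rw [← hvol, ← smul_eq_mul, ← integral_indicator_const L measurableSet_ball,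
      ← integral_const_mul]
    refine integral_mono ?_ ((integrable_posProd_mul a s hc4 σ).const_mul _) fun x => ?_
    · refine (integrable_indicator_iff measurableSet_ball).2 (integrableOn_const ?_)
      rw [Real.volume_pi_ball _ hu0]
      exact ENNReal.ofReal_ne_top
    · by_cases hx : x ∈ Metric.ball ((1 - ε) • y) u₀
      · simp only [Set.indicator_of_mem hx]
        exact hpt x hx
      · simp only [Set.indicator_of_notMem hx]
        exact mul_nonneg (exp_pos _).le (mul_nonneg (posProd_nonneg _ _) (exp_pos _).le)
  rw [← div_eq_inv_mul, le_div_iff₀' (by positivity), Finset.mul_sum]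
  refine (Finset.sum_le_sum fun σ _ => hterm σ).trans ?_
  rw [← Finset.mul_sum, ← integral_finsetSum _ fun σ _ => integrable_posProd_mul a s hc4 σ]
  refine mul_le_mul_of_nonneg_left ?_ (exp_pos _).le
  refine integral_mono (integrable_finsetSum _ fun σ _ => integrable_posProd_mul a s hc4 σ)
    (integrable_exp_neg_mul_sq_sum hc4) fun x => ?_
  simp only
  rw [← Finset.sum_mul]
  exact mul_le_of_le_one_left (exp_pos _).le (sum_posProd_le N (sum_full _))

/-! ### Local limits on the diffusive scale -/

lemma tendsto_sqrt_fst {X : Type*} {l : Filter X} :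
    Tendsto (fun q : ℕ × X => √(q.1 : ℝ)) (atTop ×ˢ l) atTop :=
  tendsto_sqrt_atTop.comp (tendsto_natCast_atTop_atTop.comp tendsto_fst)

lemma tendsto_shift {d : ℕ} (a y0 : Fin d → ℝ) :
    Tendsto (fun q : ℕ × (Fin d → ℝ) => a + (√(q.1 : ℝ))⁻¹ • q.2) (atTop ×ˢ 𝓝 y0) (𝓝 a) := by
  have h1 : Tendsto (fun q : ℕ × (Fin d → ℝ) => (√(q.1 : ℝ))⁻¹) (atTop ×ˢ 𝓝 y0) (𝓝 0) :=
    tendsto_inv_atTop_zero.comp tendsto_sqrt_fst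
  have h2 := h1.smul (tendsto_snd (f := (atTop : Filter ℕ)) (g := 𝓝 y0))
  simpa using h2.const_add a

/-- Rescaled free energy gap near a maximizer. -/
lemma tendsto_gap {d : ℕ} {G : (Fin d → ℝ) → ℝ} {a : Fin d → ℝ} {A : Matrix (Fin d) (Fin d) ℝ}
    (hexp : ∀ ε > 0, ∃ r > 0, ∀ h : Fin d → ℝ, ‖h‖ < r →
      |G a - G (a + h) - (h ⬝ᵥ A *ᵥ h) / 2| ≤ ε * ‖h‖ ^ 2) (y0 : Fin d → ℝ) :
    Tendsto (fun q : ℕ × (Fin d → ℝ) => q.1 * (G a - G (a + (√(q.1 : ℝ))⁻¹ • q.2)))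
      (atTop ×ˢ 𝓝 y0) (𝓝 ((y0 ⬝ᵥ A *ᵥ y0) / 2)) := by
  have hsnd := tendsto_snd (f := (atTop : Filter ℕ)) (g := 𝓝 y0)
  have hq : Tendsto (fun q : ℕ × (Fin d → ℝ) => (q.2 ⬝ᵥ A *ᵥ q.2) / 2)
      (atTop ×ˢ 𝓝 y0) (𝓝 ((y0 ⬝ᵥ A *ᵥ y0) / 2)) :=
    (((continuous_quadForm A).tendsto y0).comp hsnd).div_const 2
  suffices h : Tendsto (fun q : ℕ × (Fin d → ℝ) => q.1 * (G a - G (a + (√(q.1 : ℝ))⁻¹ • q.2))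
      - (q.2 ⬝ᵥ A *ᵥ q.2) / 2) (atTop ×ˢ 𝓝 y0) (𝓝 0) by
    simpa using h.add hq
  rw [Metric.tendsto_nhds]
  intro ε hε
  obtain ⟨r, hr, hexp⟩ := hexp (ε / (2 * (‖y0‖ + 1) ^ 2)) (by positivity)
  have hsh : Tendsto (fun q : ℕ × (Fin d → ℝ) => (√(q.1 : ℝ))⁻¹ • q.2) (atTop ×ˢ 𝓝 y0) (𝓝 0) := by
    simpa using tendsto_shift 0 y0
  have hN : ∀ᶠ q : ℕ × (Fin d → ℝ) in atTop ×ˢ 𝓝 y0, 0 < q.1 :=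
    tendsto_fst.eventually (eventually_gt_atTop 0)
  have hy : ∀ᶠ q : ℕ × (Fin d → ℝ) in atTop ×ˢ 𝓝 y0, ‖q.2‖ < ‖y0‖ + 1 :=
    hsnd.norm.eventually_lt_const (by linarith)
  have hrr : ∀ᶠ q : ℕ × (Fin d → ℝ) in atTop ×ˢ 𝓝 y0, ‖(√(q.1 : ℝ))⁻¹ • q.2‖ < r :=
    hsh.norm.eventually_lt_const (by simpa using hr)
  filter_upwards [hN, hy, hrr] with q hN hy hrr
  have hNr : (0 : ℝ) < q.1 := by exact_mod_cast hN
  have h1 := hexp _ hrr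
  rw [quadForm_smul, norm_smul, mul_pow, inv_pow, norm_inv, norm_of_nonneg (sqrt_nonneg _), inv_pow,
    sq_sqrt hNr.le] at h1
  rw [dist_zero_right, norm_eq_abs]
  have h2 : q.1 * (G a - G (a + (√(q.1 : ℝ))⁻¹ • q.2)) - (q.2 ⬝ᵥ A *ᵥ q.2) / 2
      = q.1 * (G a - G (a + (√(q.1 : ℝ))⁻¹ • q.2) - (q.1 : ℝ)⁻¹ * (q.2 ⬝ᵥ A *ᵥ q.2) / 2) := by
    field_simp
  rw [h2, abs_mul, abs_of_pos hNr]
  calc _ ≤ q.1 * (ε / (2 * (‖y0‖ + 1) ^ 2) * ((q.1 : ℝ)⁻¹ * ‖q.2‖ ^ 2)) := by gcongr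
    _ = ε / (2 * (‖y0‖ + 1) ^ 2) * ‖q.2‖ ^ 2 := by field_simp
    _ ≤ ε / (2 * (‖y0‖ + 1) ^ 2) * (‖y0‖ + 1) ^ 2 := by gcongr
    _ = ε / 2 := by field_simp
    _ < ε := by linarith

lemma eventually_full_shift_pos {d : ℕ} {a : Fin d → ℝ} (ha : ∀ k, 0 < full a k)
    (y0 : Fin d → ℝ) : ∀ᶠ q : ℕ × (Fin d → ℝ) in atTop ×ˢ 𝓝 y0,
      ∀ k, 0 < full (a + (√(q.1 : ℝ))⁻¹ • q.2) k := by
  rw [eventually_all]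
  intro k
  exact (((continuous_full k).tendsto a).comp (tendsto_shift a y0)).eventually_const_lt (ha k)

/-- Dominated convergence for the mixture components on the diffusive scale. -/
lemma tendsto_mixDens_of_pointwise {d : ℕ} {δ b : ℝ} {S : Matrix (Fin d) (Fin d) ℝ}
    {a a' : Fin d → ℝ}
    (hS : S.PosDef) (ha : ∀ k, 0 < full a k) (hb : 0 < b)
    (hlow : ∀ᶠ N : ℕ in atTop, ∀ x k, b ≤ mixVec δ a' N x k) (y0 : Fin d → ℝ)
    {φ : (Fin d → ℝ) → ℝ}
    (hφ : ∀ x, Tendsto (fun q : ℕ × (Fin d → ℝ) =>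
      exp (-(q.1 * kl (full (a + (√(q.1 : ℝ))⁻¹ • q.2)) (mixVec δ a' q.1 x))))
      (atTop ×ˢ 𝓝 y0) (𝓝 (φ x))) :
    Tendsto (fun q : ℕ × (Fin d → ℝ) => mixDens δ S a' q.1 (full (a + (√(q.1 : ℝ))⁻¹ • q.2)))
      (atTop ×ˢ 𝓝 y0) (𝓝 (∫ x, φ x * gaussDens S x)) := by
  unfold mixDens
  refine tendsto_integral_filter_of_dominated_convergence (gaussDens S) ?_ ?_
    (integrable_gaussDens hS) (ae_of_all _ fun x => (hφ x).mul_const _)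
  · refine Eventually.of_forall fun q => ?_
    exact ((measurable_exp_kl _).mul (continuous_gaussDens S).measurable).aestronglyMeasurable
  · filter_upwards [tendsto_fst.eventually hlow, eventually_full_shift_pos ha y0] with q h1 h2
    refine ae_of_all _ fun x => ?_
    rw [norm_of_nonneg (mul_nonneg (exp_pos _).le (gaussDens_pos hS x).le)]
    exact mul_le_of_le_one_left (gaussDens_pos hS x).le
      (exp_kl_le_one hb h1 (fun k => (h2 k).le) (sum_full _) x)

/-- Local limit of the mixture component centered at the maximizer under consideration. -/
lemma tendsto_mixDens_self {d : ℕ} {δ b : ℝ} {S H : Matrix (Fin d) (Fin d) ℝ} {a : Fin d → ℝ}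
    (hδ : 0 < δ) (hS : S.PosDef) (ha : ∀ k, 0 < full a k) (hb : 0 < b)
    (hlow : ∀ᶠ N : ℕ in atTop, ∀ x k, b ≤ mixVec δ a N x k)
    (hCSH : (covMat a + S) * H = 1) (y0 : Fin d → ℝ) :
    Tendsto (fun q : ℕ × (Fin d → ℝ) => mixDens δ S a q.1 (full (a + (√(q.1 : ℝ))⁻¹ • q.2)))
      (atTop ×ˢ 𝓝 y0)
      (𝓝 (√(H.det * ∏ k, full a k) * exp (-(1 / 2) * (y0 ⬝ᵥ H *ᵥ y0)))) := by
  -- The divergence becomes the quadratic form of `precMat a`, the inverse of `covMat a`.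
  have hconv := gaussian_convolution (precMat_posDef ha) hS (covMat_mul_precMat ha) hCSH y0
  rw [det_covMat] at hconv
  rw [← hconv]
  refine tendsto_mixDens_of_pointwise hS ha hb hlow y0 fun x => ?_
  have hlim : Tendsto (fun q : ℕ × (Fin d → ℝ) => ∑ k, √(q.1 : ℝ) ^ 2 *
      klTerm (full a k + tang q.2 k / √(q.1 : ℝ)) (full a k + tang x k / √(q.1 : ℝ)))
      (atTop ×ˢ 𝓝 y0) (𝓝 (∑ k, (tang y0 k - tang x k) ^ 2 / (2 * full a k))) :=
    tendsto_finsetSum _ fun k _ => tendsto_klTerm (ha k) tendsto_sqrt_fst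
      (((continuous_tang k).tendsto y0).comp tendsto_snd)
  have hval : -∑ k, (tang y0 k - tang x k) ^ 2 / (2 * full a k)
      = -(1 / 2) * ((y0 - x) ⬝ᵥ precMat a *ᵥ (y0 - x)) := by
    rw [precMat_quadForm, Finset.mul_sum, ← Finset.sum_neg_distrib]
    refine Finset.sum_congr rfl fun k _ => ?_
    rw [tang_sub]
    have := (ha k).ne'
    field_simp
  rw [← hval]
  refine ((continuous_exp.tendsto _).comp hlim.neg).congr' ?_
  filter_upwards [tendsto_fst.eventually (eventually_trunc_eq hδ x)] with q hq
  simp only [Function.comp_apply]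
  congr 2
  rw [kl, Finset.mul_sum]
  refine Finset.sum_congr rfl fun k _ => ?_
  rw [mixVec_apply, hq, full_add_smul, sq_sqrt (Nat.cast_nonneg _), div_eq_inv_mul, div_eq_inv_mul]

/-- The mixture components centered at the other maximizers are negligible. -/
lemma tendsto_mixDens_other {d : ℕ} {δ b : ℝ} {S : Matrix (Fin d) (Fin d) ℝ} {a a' : Fin d → ℝ}
    (hδ : 0 < δ) (hS : S.PosDef) (ha : ∀ k, 0 < full a k) (hb : 0 < b) (hne : a ≠ a')
    (hlow : ∀ᶠ N : ℕ in atTop, ∀ x k, b ≤ mixVec δ a' N x k) (y0 : Fin d → ℝ) :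
    Tendsto (fun q : ℕ × (Fin d → ℝ) => mixDens δ S a' q.1 (full (a + (√(q.1 : ℝ))⁻¹ • q.2)))
      (atTop ×ˢ 𝓝 y0) (𝓝 0) := by
  obtain ⟨k, hk⟩ := Function.ne_iff.1 hne
  have h0 : (0 : ℝ) = ∫ x, (0 : ℝ) * gaussDens S x := by simp
  rw [h0]
  refine tendsto_mixDens_of_pointwise hS ha hb hlow y0 fun x => ?_
  have h1 := ((continuous_full k.castSucc).tendsto a).comp (tendsto_shift a y0)
  have h2 : Tendsto (fun q : ℕ × (Fin d → ℝ) => full (a' + (√(q.1 : ℝ))⁻¹ • x) k.castSucc)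
      (atTop ×ˢ 𝓝 y0) (𝓝 (full a' k.castSucc)) :=
    ((continuous_full k.castSucc).tendsto a').comp ((tendsto_shift a' x).comp
      (tendsto_fst.prodMk tendsto_const_nhds))
  have h3 := ((h1.sub h2).pow 2).div_const 4
  simp only [full_castSucc] at h3
  have hpos : 0 < (a k - a' k) ^ 2 / 4 := by
    have := sub_ne_zero.2 hk
    positivity
  have h4 := (tendsto_natCast_atTop_atTop (R := ℝ)).comp (tendsto_fst (f := atTop) (g := 𝓝 y0))
  have h5 := h4.atTop_mul_pos hpos h3
  refine squeeze_zero' (Eventually.of_forall fun q => (exp_pos _).le) ?_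
    (tendsto_exp_neg_atTop_nhds_zero.comp h5)
  filter_upwards [tendsto_fst.eventually (eventually_trunc_eq hδ x), tendsto_fst.eventually hlow,
    eventually_full_shift_pos ha y0] with q hq hl hfull
  simp only [Function.comp_apply]
  rw [exp_le_exp, neg_le_neg_iff]
  refine mul_le_mul_of_nonneg_left ?_ (Nat.cast_nonneg _)
  have := kl_lower (fun k => (hfull k).le) (sum_full _) (fun k => hb.trans_le (hl x k))
    (sum_mixVec _ _ _ _) k.castSucc
  rw [mixVec, hq] at this
  rw [mixVec, hq]
  simpa using this

lemma eventually_forall_of_compact {X : Type*} [TopologicalSpace X] {K : Set X} (hK : IsCompact K)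
    {P : ℕ → X → Prop} (hP : ∀ y ∈ K, ∀ᶠ q : ℕ × X in atTop ×ˢ 𝓝 y, P q.1 q.2) :
    ∀ᶠ N in atTop, ∀ y ∈ K, P N y := by
  have h := hK.mem_prod_nhdsSet_of_forall (l := atTop) (s := {q : ℕ × X | P q.1 q.2}) hP
  obtain ⟨t, ht, u, hu, htu⟩ := mem_prod_iff.1 h
  filter_upwards [ht] with N hN y hy
  exact htu (Set.mk_mem_prod hN (subset_of_mem_nhdsSet hu hy))

/-! ### Moment bounds and the density ratio -/

/-- The magnetization in reduced coordinates. -/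
noncomputable def hat {d N : ℕ} (σ : Fin N → Fin (d + 1)) : Fin d → ℝ := fun k => emp σ k.castSucc

lemma full_hat {d N : ℕ} (hN : 0 < N) (σ : Fin N → Fin (d + 1)) : full (hat σ) = emp σ :=
  full_init (sum_emp hN σ)

lemma hat_mem {d N : ℕ} (hN : 0 < N) (σ : Fin N → Fin (d + 1)) : hat σ ∈ redSimplex d :=
  mem_redSimplex_of_full_nonneg fun k => by rw [full_hat hN]; exact emp_nonneg σ k

lemma shift_rescale {d N : ℕ} (hN : 0 < N) (a z : Fin d → ℝ) :
    a + (√(N : ℝ))⁻¹ • (√(N : ℝ) • (z - a)) = z := by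
  have : √(N : ℝ) ≠ 0 := (sqrt_pos.2 (by exact_mod_cast hN)).ne'
  rw [smul_smul, inv_mul_cancel₀ this, one_smul, add_sub_cancel]

lemma sum_rescale_sq {d N : ℕ} (a z : Fin d → ℝ) :
    ∑ k, (√(N : ℝ) • (z - a)) k ^ 2 = N * ∑ k, (z k - a k) ^ 2 := by
  rw [Finset.mul_sum]
  refine Finset.sum_congr rfl fun k _ => ?_
  rw [Pi.smul_apply, Pi.sub_apply, smul_eq_mul, mul_pow, sq_sqrt (Nat.cast_nonneg _)]

lemma one_add_sq_mul_exp_neg_le {t : ℝ} (ht : 0 ≤ t) :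
    exp (-t) * (1 + t) ^ 2 ≤ 8 * exp (-(t / 2)) := by
  have h1 := quadratic_le_exp_of_nonneg (x := t / 2) (by linarith)
  have h2 : (1 + t) ^ 2 ≤ 8 * exp (t / 2) := by nlinarith
  calc exp (-t) * (1 + t) ^ 2 ≤ exp (-t) * (8 * exp (t / 2)) := by gcongr
    _ = 8 * (exp (-t) * exp (t / 2)) := by ring
    _ = _ := by rw [← exp_add]; congr 2; ring

/-- Uniform second moment of the rescaled free energy gap under the unnormalized Gibbs weights. -/
lemma exists_gibbs_moment {d p : ℕ} {M : Fin p → Fin d → ℝ} {g : (Fin d → ℝ) → ℝ}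
    (hM : ∀ j k, 0 < full (M j) k) (hg0 : ∀ x ∈ redSimplex d, 0 ≤ g x) {c : ℝ} (hc : 0 < c)
    (hg : ∀ x ∈ redSimplex d, ∃ j, c * ∑ k, (x k - M j k) ^ 2 ≤ g x) :
    ∃ C, ∀ N : ℕ, 0 < N → ∑ σ : Fin N → Fin (d + 1), exp (-(N * shannon (emp σ))) *
      exp (-(N * g (hat σ))) * (1 + N * g (hat σ)) ^ 2 ≤ C := by
  choose C hC using fun j => exists_gauss_sum_bound (hM j) (half_pos hc)
  refine ⟨8 * ∑ j, C j, fun N hN => ?_⟩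
  calc _ ≤ ∑ σ : Fin N → Fin (d + 1), 8 * ∑ j, exp (-(N * shannon (emp σ))) *
        exp (-(c / 2) * (N * ∑ k : Fin d, (emp σ k.castSucc - M j k) ^ 2)) := by
        refine Finset.sum_le_sum fun σ _ => ?_
        obtain ⟨j, hj⟩ := hg _ (hat_mem hN σ)
        have ht : 0 ≤ N * g (hat σ) := mul_nonneg (Nat.cast_nonneg _) (hg0 _ (hat_mem hN σ))
        have h1 := one_add_sq_mul_exp_neg_le ht
        have h2 : exp (-(N * g (hat σ) / 2))
            ≤ exp (-(c / 2) * (N * ∑ k : Fin d, (emp σ k.castSucc - M j k) ^ 2)) := by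
          rw [exp_le_exp]
          have := mul_le_mul_of_nonneg_left hj (Nat.cast_nonneg (α := ℝ) N)
          simp only [hat] at this ⊢
          linarith
        have h3 : exp (-(N * shannon (emp σ))) *
            exp (-(c / 2) * (N * ∑ k : Fin d, (emp σ k.castSucc - M j k) ^ 2))
            ≤ ∑ j, exp (-(N * shannon (emp σ))) *
              exp (-(c / 2) * (N * ∑ k : Fin d, (emp σ k.castSucc - M j k) ^ 2)) :=
          Finset.single_le_sum (f := fun j => exp (-(N * shannon (emp σ))) *
              exp (-(c / 2) * (N * ∑ k : Fin d, (emp σ k.castSucc - M j k) ^ 2)))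
            (fun _ _ => by positivity) (Finset.mem_univ j)
        calc _ = exp (-(N * shannon (emp σ))) *
              (exp (-(N * g (hat σ))) * (1 + N * g (hat σ)) ^ 2) := by ring
          _ ≤ exp (-(N * shannon (emp σ))) *
              (8 * exp (-(c / 2) * (N * ∑ k : Fin d, (emp σ k.castSucc - M j k) ^ 2))) := by
              refine mul_le_mul_of_nonneg_left (h1.trans ?_) (exp_pos _).le
              linarith
          _ ≤ _ := by linarith
    _ = 8 * ∑ j, ∑ σ : Fin N → Fin (d + 1), exp (-(N * shannon (emp σ))) *
        exp (-(c / 2) * (N * ∑ k : Fin d, (emp σ k.castSucc - M j k) ^ 2)) := by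
        rw [← Finset.mul_sum, Finset.sum_comm]
    _ ≤ _ := by
        gcongr with j _
        exact hC j N hN

/-- Uniform second moment of the rescaled free energy gap under a mixture component. -/
lemma exists_mixComp_gap_moment {d : ℕ} {δ b : ℝ} {S : Matrix (Fin d) (Fin d) ℝ} {a : Fin d → ℝ}
    (hS : S.PosDef) (hb : 0 < b) {g : (Fin d → ℝ) → ℝ} (hg0 : ∀ x ∈ redSimplex d, 0 ≤ g x) {c : ℝ}
    (hc : 0 ≤ c) (hg : ∀ x ∈ redSimplex d, g x ≤ c * ‖x - a‖ ^ 2) :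
    ∃ C, ∀ N : ℕ, 0 < N → (∀ x k, b ≤ mixVec δ a N x k) →
      ∑ σ, mixComp δ S a N σ * (1 + N * g (hat σ)) ^ 2 ≤ C := by
  obtain ⟨C, hC⟩ := exists_mixComp_moment (δ := δ) (a := a) hS hb
  refine ⟨(1 + c) ^ 2 * C, fun N hN hlow => ?_⟩
  refine le_trans ?_ (mul_le_mul_of_nonneg_left (hC N hN hlow) (sq_nonneg _))
  rw [Finset.mul_sum]
  refine Finset.sum_le_sum fun σ _ => ?_
  have h0 : 0 ≤ mixComp δ S a N σ := integral_nonneg fun x =>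
    mul_nonneg (prod_mixVec_nonneg hb hlow σ x) (gaussDens_pos hS x).le
  rw [mul_left_comm, ← mul_pow]
  refine mul_le_mul_of_nonneg_left ?_ h0
  have ht : 0 ≤ N * g (hat σ) := mul_nonneg (Nat.cast_nonneg _) (hg0 _ (hat_mem hN σ))
  refine pow_le_pow_left₀ (by linarith) ?_ 2
  have h1 : ‖hat σ - a‖ ^ 2 ≤ ∑ k, (emp σ k - full a k) ^ 2 := by
    refine (norm_sq_le_sum_sq _).trans ?_
    rw [Fin.sum_univ_castSucc]
    simp only [full_castSucc, hat, Pi.sub_apply]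
    exact le_add_of_nonneg_right (sq_nonneg _)
  set s := ∑ k, (emp σ k - full a k) ^ 2
  have hs : 0 ≤ s := by positivity
  have h2 : g (hat σ) ≤ c * s := (hg _ (hat_mem hN σ)).trans (by gcongr)
  have h3 : N * g (hat σ) ≤ N * (c * s) := by gcongr
  have h4 : 0 ≤ (N : ℝ) * s := by positivity
  nlinarith

/-- The unnormalized mixture relative to `exp (-N ent)`. -/
noncomputable def mixTotal {d p : ℕ} (δ : ℝ) (S : Fin p → Matrix (Fin d) (Fin d) ℝ)
    (M : Fin p → Fin d → ℝ) (w : Fin p → ℝ) (N : ℕ) (m : Fin (d + 1) → ℝ) : ℝ :=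
  ∑ j, w j * mixDens δ (S j) (M j) N m

/-- At most linear growth of the logarithm of the density ratio in the rescaled gap. -/
lemma exists_log_bound {d p : ℕ} (hp : 1 ≤ p) {δ : ℝ} {S : Fin p → Matrix (Fin d) (Fin d) ℝ}
    {M : Fin p → Fin d → ℝ} {w b : Fin p → ℝ} (hw : ∀ j, 0 < w j)
    (hS : ∀ j, (S j).PosDef) (hb : ∀ j, 0 < b j) {g : (Fin d → ℝ) → ℝ}
    (hg0 : ∀ x ∈ redSimplex d, 0 ≤ g x) {c : ℝ} (hc : 0 < c)
    (hg : ∀ x ∈ redSimplex d, ∃ j, c * ∑ k, (x k - M j k) ^ 2 ≤ g x) :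
    ∃ C, ∀ N : ℕ, 0 < N → (∀ j x k, b j ≤ mixVec δ (M j) N x k) → ∀ σ : Fin N → Fin (d + 1),
      0 < mixTotal δ S M w N (emp σ) ∧
      |-(N * g (hat σ)) - log (mixTotal δ S M w N (emp σ))| ≤ C * (1 + N * g (hat σ)) := by
  choose C hC κ hκ hlow using fun j => exists_mixDens_lower (δ := δ) (a := M j) (hS j) (hb j)
  obtain ⟨B, hB⟩ := Finite.exists_le C
  obtain ⟨κ₀, hκ₀, hκ₀le⟩ := exists_common_pos_lower (fun j => w j * κ j)
    (fun j => mul_pos (hw j) (hκ j))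
  have hB0 : 0 < B := (hC ⟨0, hp⟩).trans_le (hB _)
  refine ⟨1 + |log κ₀| + |log (∑ j, w j)| + B / c, fun N hN hmix σ => ?_⟩
  obtain ⟨j, hj⟩ := hg _ (hat_mem hN σ)
  set t := N * g (hat σ) with htdef
  have ht : 0 ≤ t := mul_nonneg (Nat.cast_nonneg _) (hg0 _ (hat_mem hN σ))
  set Q := mixTotal δ S M w N (emp σ) with hQ
  have hterm : ∀ i, 0 ≤ w i * mixDens δ (S i) (M i) N (emp σ) := fun i =>
    mul_nonneg (hw i).le (mixDens_nonneg (hS i) _)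
  have h1 : κ₀ * exp (-(B / c) * t) ≤ Q := by
    have h2 := hlow j N hN (hmix j) (√(N : ℝ) • (hat σ - M j)) (by
      rw [shift_rescale hN, full_hat hN]; exact emp_nonneg σ)
    rw [shift_rescale hN, full_hat hN, sum_rescale_sq] at h2
    have h3 : C j * (N * ∑ k, (hat σ k - M j k) ^ 2) ≤ B / c * t := by
      have : N * (c * ∑ k, (hat σ k - M j k) ^ 2) ≤ t := by
        rw [htdef]; gcongr
      have h5 : (N : ℝ) * ∑ k, (hat σ k - M j k) ^ 2 ≤ t / c := by
        rw [le_div_iff₀ hc]; linarith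
      calc _ ≤ B * (t / c) := mul_le_mul (hB j) h5 (by positivity) hB0.le
        _ = _ := by ring
    calc κ₀ * exp (-(B / c) * t) ≤ (w j * κ j) * exp (-C j * (N * ∑ k, (hat σ k - M j k) ^ 2)) := by
          refine mul_le_mul (hκ₀le j) (exp_le_exp.2 ?_) (exp_pos _).le
            (mul_pos (hw j) (hκ j)).le
          linarith
      _ = w j * (κ j * exp (-C j * (N * ∑ k, (hat σ k - M j k) ^ 2))) := by ring
      _ ≤ w j * mixDens δ (S j) (M j) N (emp σ) := mul_le_mul_of_nonneg_left h2 (hw j).le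
      _ ≤ Q := Finset.single_le_sum (f := fun i => w i * mixDens δ (S i) (M i) N (emp σ))
          (fun i _ => hterm i) (Finset.mem_univ j)
  have hQ0 : 0 < Q := lt_of_lt_of_le (by positivity) h1
  have h6 : Q ≤ ∑ j, w j := Finset.sum_le_sum fun i _ => mul_le_of_le_one_right (hw i).le
    (mixDens_le_one (hS i) (hb i) (hmix i) (emp_nonneg σ) (sum_emp hN σ))
  refine ⟨hQ0, ?_⟩
  have h7 : log κ₀ - B / c * t ≤ log Q := by
    have := log_le_log (by positivity) h1
    rw [log_mul hκ₀.ne' (exp_pos _).ne', log_exp] at this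
    linarith
  have h8 := log_le_log hQ0 h6
  have h9 : 0 ≤ B / c := by positivity
  have h10 := neg_abs_le (log κ₀)
  have h11 := le_abs_self (log (∑ j, w j))
  have h12 : 0 ≤ |log κ₀| * t := by positivity
  have h13 : 0 ≤ |log (∑ j, w j)| * t := by positivity
  have h14 : 0 ≤ B / c * t := by positivity
  rw [abs_le]
  constructor <;> nlinarith [abs_nonneg (log κ₀), abs_nonneg (log (∑ j, w j))]

/-- Near each maximizer the density ratio tends to one on the diffusive scale, uniformly on
compacts. -/
lemma eventually_log_ratio_le {d p : ℕ} {δ : ℝ} {S A : Fin p → Matrix (Fin d) (Fin d) ℝ}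
    {M : Fin p → Fin d → ℝ} {w b : Fin p → ℝ} {G : (Fin d → ℝ) → ℝ}
    (hδ : 0 < δ) (hS : ∀ j, (S j).PosDef) (hb : ∀ j, 0 < b j)
    (hM : ∀ j k, 0 < full (M j) k) (hMinj : Function.Injective M)
    (hlow : ∀ j, ∀ᶠ N : ℕ in atTop, ∀ x k, b j ≤ mixVec δ (M j) N x k)
    (hA : ∀ j, (A j).PosDef) (hCSH : ∀ j, (covMat (M j) + S j) * A j = 1)
    (hw : ∀ j, w j = (√((A j).det * ∏ k, full (M j) k))⁻¹)
    (hexp : ∀ j, ∀ ε > 0, ∃ r > 0, ∀ h : Fin d → ℝ, ‖h‖ < r →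
      |G (M j) - G (M j + h) - (h ⬝ᵥ A j *ᵥ h) / 2| ≤ ε * ‖h‖ ^ 2) (j : Fin p) (R : ℝ)
    {ε : ℝ} (hε : 0 < ε) :
    ∀ᶠ N : ℕ in atTop, ∀ y ∈ Metric.closedBall (0 : Fin d → ℝ) R,
      |-(N * (G (M j) - G (M j + (√(N : ℝ))⁻¹ • y)))
        - log (mixTotal δ S M w N (full (M j + (√(N : ℝ))⁻¹ • y)))| ≤ ε := by
  refine eventually_forall_of_compact (isCompact_closedBall _ _) fun y0 _ => ?_
  have h1 : Tendsto (fun q : ℕ × (Fin d → ℝ) =>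
      mixTotal δ S M w q.1 (full (M j + (√(q.1 : ℝ))⁻¹ • q.2))) (atTop ×ˢ 𝓝 y0)
      (𝓝 (∑ i, if i = j then exp (-(1 / 2) * (y0 ⬝ᵥ A j *ᵥ y0)) else 0)) := by
    refine tendsto_finsetSum _ fun i _ => ?_
    split_ifs with hij
    · subst hij
      have h2 := (tendsto_mixDens_self hδ (hS i) (hM i) (hb i) (hlow i) (hCSH i) y0).const_mul (w i)
      have hpos : 0 < √((A i).det * ∏ k, full (M i) k) :=
        sqrt_pos.2 (mul_pos (hA i).det_pos (Finset.prod_pos fun k _ => hM i k))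
      -- The weight `w i` cancels the determinantal prefactor of the local limit.
      rwa [hw i, ← mul_assoc, inv_mul_cancel₀ hpos.ne', one_mul, ← hw i] at h2
    · have h2 := (tendsto_mixDens_other hδ (hS i) (hM j) (hb i)
        (fun h => hij (hMinj h).symm) (hlow i) y0).const_mul (w i)
      rwa [mul_zero] at h2
  rw [Finset.sum_ite_eq' Finset.univ j, if_pos (Finset.mem_univ j)] at h1
  have h3 := h1.log (exp_pos _).ne'
  have h4 := ((tendsto_gap (hexp j) y0).neg.sub h3).abs
  rw [log_exp] at h4
  refine h4.eventually_le_const ?_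
  have : -((y0 ⬝ᵥ A j *ᵥ y0) / 2) - -(1 / 2) * (y0 ⬝ᵥ A j *ᵥ y0) = 0 := by ring
  rwa [this, abs_zero]

/-! ### Convergence in relative entropy -/

/-- The approximation in relative entropy, for Gibbs weights normalized by the maximum `Gs` of the
free energy and expressed in reduced coordinates. -/
theorem relEnt_gibbs_mixture {d p : ℕ} (hp : 1 ≤ p) {δ : ℝ} (hδ0 : 0 < δ) (hδ : δ < 1 / 2)
    {F : (Fin (d + 1) → ℝ) → ℝ} {G : (Fin d → ℝ) → ℝ}
    (hG : ∀ x, G x = F (full x) + shannon (full x))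
    (hcont : ContinuousOn G (redSimplex d))
    {M : Fin p → Fin d → ℝ} (hMinj : Function.Injective M) (hM : ∀ j k, 0 < full (M j) k)
    {Gs : ℝ} (hGs : ∀ j, G (M j) = Gs) (hmax : ∀ x ∈ redSimplex d, G x ≤ Gs)
    (honly : ∀ x ∈ redSimplex d, (∀ y ∈ redSimplex d, G y ≤ G x) → ∃ j, x = M j)
    {A S : Fin p → Matrix (Fin d) (Fin d) ℝ} (hA : ∀ j, (A j).PosDef) (hS : ∀ j, (S j).PosDef)
    (hexp : ∀ j, ∀ ε > 0, ∃ r > 0, ∀ h : Fin d → ℝ, ‖h‖ < r →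
      |G (M j) - G (M j + h) - (h ⬝ᵥ A j *ᵥ h) / 2| ≤ ε * ‖h‖ ^ 2)
    (hCSH : ∀ j, (covMat (M j) + S j) * A j = 1)
    {w : Fin p → ℝ} (hw : ∀ j, w j = (√((A j).det * ∏ k, full (M j) k))⁻¹)
    (f ν : ∀ N : ℕ, (Fin N → Fin (d + 1)) → ℝ)
    (hf : ∀ N σ, f N σ = (∑ j, w j)⁻¹ * exp (N * (F (emp σ) - Gs)))
    (hν : ∀ N σ, ν N σ = (∑ j, w j)⁻¹ * ∑ j, w j * mixComp δ (S j) (M j) N σ) :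
    Tendsto (fun N => relEnt (fun s => f N s / ∑ t, f N t) (ν N)) atTop (𝓝 0) ∧
    Tendsto (fun N => relEnt (ν N) (fun s => f N s / ∑ t, f N t)) atTop (𝓝 0) := by
  have hw0 : ∀ j, 0 < w j := fun j => by
    rw [hw]
    exact inv_pos.2 (sqrt_pos.2 (mul_pos (hA j).det_pos (Finset.prod_pos fun k _ => hM j k)))
  have hws : 0 < ∑ j, w j := Finset.sum_pos (fun j _ => hw0 j) ⟨⟨0, hp⟩, Finset.mem_univ _⟩
  choose b hb hlow using fun j => exists_mixVec_lower hδ (hM j)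
  have hlow' : ∀ᶠ N : ℕ in atTop, ∀ j x k, b j ≤ mixVec δ (M j) N x k :=
    eventually_all.2 hlow
  have hMmem : ∀ j, M j ∈ redSimplex d := fun j =>
    mem_redSimplex_of_full_nonneg fun k => (hM j k).le
  obtain ⟨c, hc, hgap⟩ := exists_gap_lower hp hcont hMmem hGs hmax honly A hA hexp
  set g : (Fin d → ℝ) → ℝ := fun x => Gs - G x with hgdef
  have hg0 : ∀ x ∈ redSimplex d, 0 ≤ g x := fun x hx => sub_nonneg.2 (hmax x hx)
  choose c' hc' hgap' using fun j => exists_gap_upper hcont (A j) (hexp j 1 one_pos)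
  obtain ⟨C₁, hC₁⟩ := exists_gibbs_moment hM hg0 hc hgap
  choose C₂ hC₂ using fun j => exists_mixComp_gap_moment (δ := δ) (a := M j) (hS j) (hb j) hg0
    (hc' j) (fun x hx => by rw [hgdef, ← hGs j]; exact hgap' j x hx)
  obtain ⟨C₃, hC₃⟩ := exists_log_bound (δ := δ) hp hw0 hS hb hg0 hc hgap
  set C₄ := (∑ j, w j)⁻¹ * ∑ j, w j * C₂ j with hC₄
  set C₅ := (∑ j, w j)⁻¹ * C₁ with hC₅
  set W : ∀ N : ℕ, (Fin N → Fin (d + 1)) → ℝ := fun N σ => 1 + max 0 (N * g (hat σ)) with hW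
  have hWeq : ∀ N : ℕ, 0 < N → ∀ σ : Fin N → Fin (d + 1), W N σ = 1 + N * g (hat σ) := by
    intro N hN σ
    rw [hW]
    simp only
    rw [max_eq_right (mul_nonneg (Nat.cast_nonneg _) (hg0 _ (hat_mem hN σ)))]
  have hf' : ∀ N : ℕ, 0 < N → ∀ σ : Fin N → Fin (d + 1), f N σ
      = (∑ j, w j)⁻¹ * (exp (-(N * shannon (emp σ))) * exp (-(N * g (hat σ)))) := by
    intro N hN σ
    rw [hf, ← exp_add, hgdef]
    simp only
    rw [hG, full_hat hN]
    congr 2; ring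
  have hν' : ∀ N : ℕ, 0 < N → (∀ j x k, b j ≤ mixVec δ (M j) N x k) →
      ∀ σ : Fin N → Fin (d + 1), ν N σ
      = (∑ j, w j)⁻¹ * (exp (-(N * shannon (emp σ))) * mixTotal δ S M w N (emp σ)) := by
    intro N hN hl σ
    rw [hν, mixTotal, Finset.mul_sum Finset.univ _ (exp _)]
    congr 1
    refine Finset.sum_congr rfl fun j _ => ?_
    rw [mixComp_eq (hb j) hN (hl j)]
    ring
  have hlog : ∀ N : ℕ, 0 < N → (∀ j x k, b j ≤ mixVec δ (M j) N x k) →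
      ∀ σ : Fin N → Fin (d + 1), log (f N σ / ν N σ)
      = -(N * g (hat σ)) - log (mixTotal δ S M w N (emp σ)) := by
    intro N hN hl σ
    have hQ := (hC₃ N hN hl σ).1
    rw [hf' N hN, hν' N hN hl, mul_div_mul_left _ _ (inv_pos.2 hws).ne',
      mul_div_mul_left _ _ (exp_pos _).ne', log_div (exp_pos _).ne' hQ.ne', log_exp]
  have hW1 : ∀ N σ, 1 ≤ W N σ := fun N σ => le_add_of_nonneg_right (le_max_left _ _)
  refine relEnt_tendsto f ν W (max C₃ (max C₄ C₅)) hW1 ?_ ?_ ?_ ?_ ?_ ?_ ?_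
  · refine Eventually.of_forall fun N σ => ?_
    rw [hf]; positivity
  · filter_upwards [hlow', eventually_gt_atTop 0] with N hl hN σ
    have hQ := (hC₃ N hN hl σ).1
    rw [hν' N hN hl]; positivity
  · filter_upwards [hlow'] with N hl
    simp only [hν]
    rw [← Finset.mul_sum, Finset.sum_comm]
    simp only [← Finset.mul_sum, sum_mixComp (hS _) (hb _) (hl _), mul_one]
    exact inv_mul_cancel₀ hws.ne'
  · filter_upwards [hlow', eventually_gt_atTop 0] with N hl hN σ
    rw [hlog N hN hl]
    have := (hC₃ N hN hl σ).2
    rw [← hWeq N hN] at this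
    exact this.trans (mul_le_mul_of_nonneg_right (le_max_left _ _) (zero_le_one.trans (hW1 N σ)))
  · filter_upwards [eventually_gt_atTop 0] with N hN
    refine le_trans ?_ ((le_max_right C₄ C₅).trans (le_max_right _ _))
    rw [hC₅]
    refine le_trans (le_of_eq ?_) (mul_le_mul_of_nonneg_left (hC₁ N hN) (inv_pos.2 hws).le)
    rw [Finset.mul_sum]
    refine Finset.sum_congr rfl fun σ _ => ?_
    rw [hf' N hN, hWeq N hN]
    ring
  · filter_upwards [hlow', eventually_gt_atTop 0] with N hl hN
    refine le_trans ?_ ((le_max_left C₄ C₅).trans (le_max_right _ _))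
    rw [hC₄]
    calc ∑ σ, ν N σ * W N σ ^ 2
        = (∑ j, w j)⁻¹ * ∑ j, w j * ∑ σ, mixComp δ (S j) (M j) N σ * (1 + N * g (hat σ)) ^ 2 := by
          simp only [Finset.mul_sum]
          rw [Finset.sum_comm]
          refine Finset.sum_congr rfl fun σ _ => ?_
          rw [hν, hWeq N hN, Finset.mul_sum, Finset.sum_mul]
          exact Finset.sum_congr rfl fun j _ => by ring
      _ ≤ _ := by
          refine mul_le_mul_of_nonneg_left (Finset.sum_le_sum fun j _ => ?_) (inv_pos.2 hws).le
          exact mul_le_mul_of_nonneg_left (hC₂ j N hN (hl j)) (hw0 j).le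
  -- On a sublevel set of `W` the magnetization is within `O(1/√N)` of a maximizer.
  · intro R ε hε
    have hu : ∀ᶠ N : ℕ in atTop, ∀ j, ∀ y ∈ Metric.closedBall (0 : Fin d → ℝ) √(R / c),
        |-(N * (G (M j) - G (M j + (√(N : ℝ))⁻¹ • y)))
          - log (mixTotal δ S M w N (full (M j + (√(N : ℝ))⁻¹ • y)))| ≤ ε :=
      eventually_all.2 fun j => eventually_log_ratio_le hδ0 hS hb hM hMinj hlow hA hCSH hw hexp j _ hε
    filter_upwards [hu, hlow', eventually_gt_atTop 0] with N hu hl hN σ hσ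
    obtain ⟨j, hj⟩ := hgap _ (hat_mem hN σ)
    have h1 := hu j (√(N : ℝ) • (hat σ - M j)) (by
      rw [mem_closedBall_zero_iff]
      refine le_sqrt_of_sq_le ((norm_sq_le_sum_sq _).trans ?_)
      rw [sum_rescale_sq, le_div_iff₀ hc]
      rw [hWeq N hN] at hσ
      have := mul_le_mul_of_nonneg_left hj (Nat.cast_nonneg (α := ℝ) N)
      linarith)
    rw [shift_rescale hN, full_hat hN, hGs j] at h1
    rw [hlog N hN hl]
    exact h1

/-- The map `full` as an affine, hence smooth, map. -/
lemma contDiff_full {d : ℕ} {n : WithTop ℕ∞} : ContDiff ℝ n (full (d := d)) := by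
  rw [contDiff_pi]
  intro k
  refine Fin.lastCases ?_ (fun k => ?_) k
  · simp only [full_last]; fun_prop
  · simp only [full_castSucc]; fun_prop

end GibbsMixture

open GibbsMixture

/-- Under assumptions (A) and (B), the mixture of product measures `ν_N`
approximates the Gibbs measure `μ_N` in relative entropy in both directions:
`H(μ_N|ν_N) → 0` and `H(ν_N|μ_N) → 0` as `N → ∞`. Here `q = d + 1`, `d ≥ 1`. -/
theorem stmt_1
    (d p : ℕ) (hd : 1 ≤ d) (hp : 1 ≤ p)
    (F : (Fin (d + 1) → ℝ) → ℝ)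
    (hF : ContDiffOn ℝ 2 F {m : Fin (d + 1) → ℝ | (∀ k, 0 ≤ m k) ∧ ∑ k, m k = 1})
    (ent : (Fin (d + 1) → ℝ) → ℝ)
    (hent : ∀ m, ent m = -∑ k, m k * Real.log (m k))
    (G : (Fin d → ℝ) → ℝ)
    (hG : ∀ x : Fin d → ℝ,
      G x = F (Fin.snoc x (1 - ∑ k, x k)) + ent (Fin.snoc x (1 - ∑ k, x k)))
    (Δhat : Set (Fin d → ℝ))
    (hΔhat : Δhat = {x : Fin d → ℝ | (∀ k, 0 ≤ x k) ∧ ∑ k, x k ≤ 1})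
    (M : Fin p → Fin d → ℝ)
    (hMinj : Function.Injective M)
    (hMint : ∀ j, M j ∈ interior Δhat)
    (hMmax : ∀ j, ∀ x ∈ Δhat, G x ≤ G (M j))
    (hMonly : ∀ x ∈ Δhat, (∀ y ∈ Δhat, G y ≤ G x) → ∃ j, x = M j)
    (H : Fin p → Matrix (Fin d) (Fin d) ℝ)
    (hH : ∀ j k l, H j k l =
      -(fderiv ℝ (fun x => fderiv ℝ G x (Pi.single l 1)) (M j)) (Pi.single k 1))
    (hHpd : ∀ j, (H j).PosDef)
    (Mfull : Fin p → Fin (d + 1) → ℝ)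
    (hMfull : ∀ j, Mfull j = Fin.snoc (M j) (1 - ∑ k, M j k))
    (w : Fin p → ℝ)
    (hw : ∀ j, w j = (Real.sqrt ((H j).det * ∏ k, Mfull j k))⁻¹)
    -- the Gibbs measure
    (Z : ℕ → ℝ)
    (hZ : ∀ N : ℕ, Z N = ∑ σ : Fin N → Fin (d + 1),
      Real.exp ((N : ℝ) * F (fun k => ((Finset.univ.filter fun i => σ i = k).card : ℝ) / N)))
    (μ : ∀ N : ℕ, (Fin N → Fin (d + 1)) → ℝ)
    (hμ : ∀ N σ, μ N σ =
      Real.exp ((N : ℝ) * F (fun k => ((Finset.univ.filter fun i => σ i = k).card : ℝ) / N)) / Z N)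
    -- the mixing Gaussian distributions
    (Smat : Fin p → Matrix (Fin d) (Fin d) ℝ)
    (hS : ∀ j, Smat j = (H j)⁻¹ - Matrix.diagonal (M j) + Matrix.of fun k l => M j k * M j l)
    (hSpd : ∀ j, (Smat j).PosDef)
    (gauss : Fin p → (Fin d → ℝ) → ℝ)
    (hgauss : ∀ j x, gauss j x =
      Real.exp (-(1 / 2) * ∑ k, ∑ l, x k * (Smat j)⁻¹ k l * x l) /
        Real.sqrt ((2 * Real.pi) ^ d * (Smat j).det))
    (δ : ℝ) (hδ0 : 0 < δ) (hδ : δ < 1 / 6)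
    -- truncation at Euclidean norm `N ^ δ` and extension by `ξ_q = -∑_{k<q} ξ_k`
    (trunc : ℕ → (Fin d → ℝ) → Fin d → ℝ)
    (htrunc : ∀ N x, trunc N x = if Real.sqrt (∑ l, x l ^ 2) ≤ (N : ℝ) ^ δ then x else 0)
    (ext : (Fin d → ℝ) → Fin (d + 1) → ℝ)
    (hext : ∀ x, ext x = Fin.snoc x (-∑ k, x k))
    -- the mixture of product measures
    (ν : ∀ N : ℕ, (Fin N → Fin (d + 1)) → ℝ)
    (hν : ∀ N σ, ν N σ = (∑ j, w j)⁻¹ * ∑ j, w j *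
      ∫ x : Fin d → ℝ,
        (∏ i, ∑ k, (Mfull j k + ext (trunc N x) k / Real.sqrt N) *
          (if σ i = k then (1 : ℝ) else 0)) * gauss j x) :
    Tendsto (fun N => relEnt (μ N) (ν N)) atTop (nhds 0) ∧
      Tendsto (fun N => relEnt (ν N) (μ N)) atTop (nhds 0) := by
  have hΔ : Δhat = redSimplex d := hΔhat
  subst hΔ
  have hM : ∀ j k, 0 < full (M j) k := fun j k => full_pos_of_mem_interior hd (hMint j) k
  have hMfull' : ∀ j, Mfull j = full (M j) := hMfull
  have hG' : ∀ x, G x = F (full x) + shannon (full x) := fun x => by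
    rw [hG, hent]; rfl
  have hmaps : Set.MapsTo full (redSimplex d)
      {m : Fin (d + 1) → ℝ | (∀ k, 0 ≤ m k) ∧ ∑ k, m k = 1} := fun x hx =>
    ⟨full_nonneg hx, sum_full x⟩
  have hFfull : ContDiffOn ℝ 2 (fun x => F (full x)) (redSimplex d) :=
    hF.comp contDiff_full.contDiffOn hmaps
  have hGeq : G = fun x => F (full x) + shannon (full x) := funext hG'
  have hcont : ContinuousOn G (redSimplex d) := by
    rw [hGeq]
    refine hFfull.continuousOn.add (Continuous.continuousOn ?_)
    unfold shannon
    refine (continuous_finsetSum _ fun k _ => ?_).neg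
    exact continuous_mul_log.comp (continuous_full k)
  have hGC2 : ContDiffOn ℝ 2 G (interior (redSimplex d)) := by
    rw [hGeq]
    refine (hFfull.mono interior_subset).add ?_
    unfold shannon
    refine (ContDiffOn.sum fun k _ => ?_).neg
    have hk : ContDiffOn ℝ 2 (fun x : Fin d → ℝ => full x k) (interior (redSimplex d)) :=
      ((contDiff_pi.1 contDiff_full) k).contDiffOn
    exact hk.mul (hk.log fun x hx => (full_pos_of_mem_interior hd hx k).ne')
  have hMmem : ∀ j, M j ∈ redSimplex d := fun j => interior_subset (hMint j)
  set Gs := G (M ⟨0, hp⟩) with hGsdef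
  have hGs : ∀ j, G (M j) = Gs := fun j =>
    le_antisymm (hMmax _ _ (hMmem j)) (hMmax j _ (hMmem _))
  have hexp : ∀ j, ∀ ε > 0, ∃ r > 0, ∀ h : Fin d → ℝ, ‖h‖ < r →
      |G (M j) - G (M j + h) - dotProduct h ((H j).mulVec h) / 2| ≤ ε * ‖h‖ ^ 2 := fun j ε hε =>
    exists_expansion (hMint j) hGC2 (hMmax j) (H j) (hH j) hε
  have hCSH : ∀ j, (covMat (M j) + Smat j) * H j = 1 := fun j => by
    have : covMat (M j) + Smat j = (H j)⁻¹ := by rw [hS, covMat]; abel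
    rw [this, Matrix.nonsing_inv_mul _ (hHpd j).det_pos.ne'.isUnit]
  have hgauss' : ∀ j x, gauss j x = gaussDens (Smat j) x := fun j x => by
    rw [hgauss, gaussDens]
    congr 3
    simp only [dotProduct, Matrix.mulVec, Finset.mul_sum, mul_assoc]
  have hws : 0 < ∑ j, w j := Finset.sum_pos (fun j _ => by
    rw [hw, hMfull']
    exact inv_pos.2 (sqrt_pos.2 (mul_pos (hHpd j).det_pos (Finset.prod_pos fun k _ => hM j k))))
    ⟨⟨0, hp⟩, Finset.mem_univ _⟩
  have key := relEnt_gibbs_mixture (S := Smat) hp hδ0 (by linarith) hG' hcont hMinj hM hGs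
    (fun x hx => hMmax _ x hx) hMonly hHpd hSpd hexp hCSH
    (fun j => by rw [hw, hMfull'])
    (fun N σ => (∑ j, w j)⁻¹ * exp (N * (F (emp σ) - Gs))) ν (fun _ _ => rfl) (fun N σ => by
      rw [hν]
      congr 1
      refine Finset.sum_congr rfl fun j _ => ?_
      congr 1
      unfold mixComp
      congr 1; ext x
      rw [hgauss']
      congr 1
      refine Finset.prod_congr rfl fun i _ => ?_
      simp only [mul_ite, mul_one, mul_zero, Finset.sum_ite_eq, Finset.mem_univ, if_true]
      rw [mixVec_apply, hMfull', hext, htrunc, div_eq_inv_mul]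
      rfl)
  have hμ' : μ = fun (N : ℕ) (σ : Fin N → Fin (d + 1)) =>
      ((∑ j, w j)⁻¹ * exp (N * (F (emp σ) - Gs))) /
      ∑ τ : Fin N → Fin (d + 1), ((∑ j, w j)⁻¹ * exp (N * (F (emp τ) - Gs))) := by
    funext N σ
    rw [hμ, hZ, ← Finset.mul_sum, mul_div_mul_left _ _ (inv_pos.2 hws).ne']
    have h1 : ∀ τ : Fin N → Fin (d + 1), exp (N * (F (emp τ) - Gs))
        = exp (-(N * Gs)) * exp (N * F (emp τ)) := fun τ => by
      rw [← exp_add]; congr 1; ring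
    simp only [h1]
    rw [← Finset.mul_sum, mul_div_mul_left _ _ (exp_pos _).ne']
    rfl
  rw [hμ']
  exact key
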